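/- Let X = X(d,p) be the uniform RWRE with 2-valued graph distribution E¹ = {e_1,…,e_d}, E² = {−e_1,…,−e_d}, where μ(G_o = E¹) = p ∈ (0,1) and μ(G_o = E²) = 1−p. Then: (i) if d ≥ 6, X is transient for every p (P-almost surely every site is visited only finitely often); (ii) if d ≥ 10, for each p there exists a deterministic v[p] ∈ R^d, with each coordinate v^{[i]}[p] nondecreasing in p, such that P(lim_{n→∞} n^{-1}X_n = v[p]) = 1. -/

import Mathlib

/-!
The annealed law of the orthant model is determined by its cylinder probabilities: each step costs
`1/d`, and each visited site costs the probability of the sign seen there (`IsOrth`,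
`IsOrth.unique`, `rwre_orth`). Any other process with the same cylinder probabilities may therefore
replace the given walk, and two realisations are used.

**Lazily revealed environment** (`lwalk`, `lwalk_orth`). At each time there is an i.i.d. pair of a
direction `u` and a sign; the sign is used only when the current site is new. From a positive site
the walk takes the step `e_u`, from a negative one `-e_{u'}`, where the involution `u ↦ u'` exchanges
`j` and `j + D` for `j < D`. For `2 D ≤ d` the projection `x ↦ (x_j - x_{j+D})_{j < D}` then receives
the same increment from both kinds of sites. Hence, whatever the environment, it is a lazy simple
random walk on `ℤ^D` (`Yproj_lwalk`), whose transition probabilities are `O(n^{-D/2})` by Fourier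
inversion (`qk_le`).

If `d ≥ 6`, take `D = 3`: the exponent `3/2` makes the return probabilities summable, and the
Borel-Cantelli lemma gives transience (`lwalk_transient`).

If `d ≥ 10`, take `D = 5`: the sum of `(j - i)^{-5/2}` over `i < t ≤ j` converges, so a given time is a
cut time of the projected walk with probability bounded below (`locCut_pos`), and cut times are
frequent (`noCut_le`). After a cut time the walk sees only new sites, so it restarts as a copy driven
by the shifted sequence (`lwalk_cut`). This gives approximate additivity in `L¹` (`Xw_err`,
`Xw_blocks`), then convergence of the mean velocity (`Xm_tendsto`), and, by comparison with sums of
independent blocks along the times `N^40`, the strong law of large numbers (`Xw_lln`).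

**Lists of directions** (`pwalk`, `pwalk_orth`). For the monotonicity in `p`, the steps from positive
and from negative sites are read off two independent lists. The position is then a function of the
number of positive steps alone, so adding positive sites can only increase this number at every time
(`lplus_mono`), and with it every coordinate. Thresholding i.i.d. uniform variables couples the
environments for all `p` monotonically; the mean displacements (`Xm_mono`), and hence the velocities,
are nondecreasing.
-/

open MeasureTheory Filter Set Topology
open scoped Classical ENNReal

noncomputable section

/-- Lattice sites of `ℤ^d`. -/
abbrev Site (d : ℕ) := Fin d → ℤ

/-- The `2d` unit vectors `±e_i` of `ℤ^d`, indexed by `Fin d × Bool`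
(`true` for `+e_i`, `false` for `-e_i`). -/
def stepVec (d : ℕ) (i : Fin d × Bool) : Site d :=
  if i.2 = true then Pi.single i.1 1 else -Pi.single i.1 1

/-- An element of `𝒫`: a probability measure on the set `E` of unit vectors of `ℤ^d`,
recorded via its probability mass function on lattice vectors. -/
structure EnvDist (d : ℕ) where
  prob : Site d → ℝ
  nonneg : ∀ v, 0 ≤ prob v
  support : ∀ v, prob v ≠ 0 → ∃ i, v = stepVec d i
  total : ∑ i : Fin d × Bool, prob (stepVec d i) = 1

instance {d : ℕ} : MeasurableSpace (EnvDist d) :=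
  MeasurableSpace.comap EnvDist.prob inferInstance

/-- Environments: an element of `𝒫` at every site. -/
abbrev EnvOmega (d : ℕ) := Site d → EnvDist d

/-- Path space for the walk. -/
abbrev PathSpace (d : ℕ) := ℕ → Site d

/-- Sample space for the annealed walk: environment together with path. -/
abbrev RWSpace (d : ℕ) := EnvOmega d × PathSpace d

/-- Dot product of a lattice vector with a real vector. -/
def dotR {d : ℕ} (x : Site d) (l : Fin d → ℝ) : ℝ := ∑ i, (x i : ℝ) * l i

/-- Dot product of two lattice vectors. -/
def dotZ {d : ℕ} (x y : Site d) : ℤ := ∑ i, x i * y i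

/-- Quenched probability that the walk follows the steps of `x` for its first `n` steps. -/
def pathWeight {d : ℕ} (ω : EnvOmega d) (n : ℕ) (x : ℕ → Site d) : ℝ :=
  ∏ k ∈ Finset.range n, (ω (x k)).prob (x (k + 1) - x k)

/-- `ν` is the product measure `μ^{⊗ℤ^d}`, i.e. the coordinates are i.i.d. with law `μ`. -/
def IsIIDEnv {d : ℕ} (μ : Measure (EnvDist d)) (ν : Measure (EnvOmega d)) : Prop :=
  IsProbabilityMeasure μ ∧ IsProbabilityMeasure ν ∧
    ∀ (s : Finset (Site d)) (A : Site d → Set (EnvDist d)),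
      (∀ x ∈ s, MeasurableSet (A x)) →
      ν {ω | ∀ x ∈ s, ω x ∈ A x} = ∏ x ∈ s, μ (A x)

/-- `P` is the annealed law of the RWRE started at the origin in an i.i.d. environment
with marginal `μ`: the environment marginal is the i.i.d. product, and the cylinder
probabilities are given by averaging the quenched Markov-chain probabilities. -/
def IsRWRE {d : ℕ} (μ : Measure (EnvDist d)) (P : Measure (RWSpace d)) : Prop :=
  IsProbabilityMeasure P ∧ IsIIDEnv μ (P.map Prod.fst) ∧
    ∀ (n : ℕ) (x : ℕ → Site d) (A : Set (EnvOmega d)), MeasurableSet A →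
      (P {q | q.1 ∈ A ∧ ∀ k ≤ n, q.2 k = x k}).toReal =
        (if x 0 = 0 then (1 : ℝ) else 0) * ∫ ω in A, pathWeight ω n x ∂(P.map Prod.fst)

/-- `Q` is the quenched law `ℙ_ω` of the walk in the fixed environment `ω`, started at the
origin. -/
def IsQuenchedRW {d : ℕ} (ω : EnvOmega d) (Q : Measure (PathSpace d)) : Prop :=
  IsProbabilityMeasure Q ∧
    ∀ (n : ℕ) (x : ℕ → Site d),
      (Q {w | ∀ k ≤ n, w k = x k}).toReal =
        (if x 0 = 0 then (1 : ℝ) else 0) * pathWeight ω n x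

/-- `x → y`: there is a directed path from `x` to `y` in the graph `G(ω)`. -/
def Reaches {d : ℕ} (ω : EnvOmega d) : Site d → Site d → Prop :=
  Relation.ReflTransGen (fun a b => 0 < (ω a).prob (b - a))

/-- The forward cluster `C_x`. -/
def clusterC {d : ℕ} (ω : EnvOmega d) (x : Site d) : Set (Site d) := {y | Reaches ω x y}

/-- The mutually connected cluster `M_x = C_x ∩ B_x`. -/
def clusterM {d : ℕ} (ω : EnvOmega d) (x : Site d) : Set (Site d) :=
  {y | Reaches ω x y ∧ Reaches ω y x}

/-- The local drift `u = ∑_e γ(e) e` of an environment value `γ`. -/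
def drift {d : ℕ} (γ : EnvDist d) : Fin d → ℝ :=
  fun i => ∑ k : Fin d × Bool, γ.prob (stepVec d k) * ((stepVec d k i : ℤ) : ℝ)

/-- `N_n`: the number of times before time `n` at which the walk sits on a site whose
environment equals `γ`. -/
def envCount {d : ℕ} (γ : EnvDist d) (q : RWSpace d) (n : ℕ) : ℕ :=
  Set.ncard {m : ℕ | m < n ∧ q.1 (q.2 m) = γ}

end

namespace Orth

/-! ### The projected random walk and its heat kernel -/

/-- The involution of `Fin d` exchanging `j` and `j + D` for `j < D` and fixing all `u ≥ 2 D`. -/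
def partner {D d : ℕ} (h : 2 * D ≤ d) (u : Fin d) : Fin d :=
  if h1 : u.1 < D then ⟨u.1 + D, by omega⟩
  else if h2 : u.1 < 2 * D then ⟨u.1 - D, by omega⟩ else u

/-- The increment of the projected walk in `ℤ^D` produced by the direction `u`. -/
def yinc (D d : ℕ) (u : Fin d) : Fin D → ℤ :=
  fun j => if u.1 = j.1 then 1 else if u.1 = j.1 + D then -1 else 0

lemma partner_partner {D d : ℕ} (h : 2 * D ≤ d) (u : Fin d) : partner h (partner h u) = u := by
  rcases lt_or_ge u.1 D with h1 | h1
  · apply Fin.ext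
    have h3 : u.1 + D < 2 * D := by omega
    simp [partner, h1, h3]
  · rcases lt_or_ge u.1 (2 * D) with h2 | h2
    · apply Fin.ext
      have h3 : u.1 - D < D := by omega
      simp [partner, h1.not_gt, h2, h3]
      omega
    · simp [partner, h1.not_gt, h2.not_gt]

lemma yinc_partner {D d : ℕ} (h : 2 * D ≤ d) (u : Fin d) :
    yinc D d (partner h u) = - yinc D d u := by
  funext j
  have := j.2
  simp only [yinc, partner, Pi.neg_apply]
  split_ifs <;> simp at * <;> omega

/-- The involution `partner` as a permutation. -/
def partnerEquiv {D d : ℕ} (h : 2 * D ≤ d) : Fin d ≃ Fin d :=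
  ⟨partner h, partner h, partner_partner h, partner_partner h⟩

/-- The `n`-step transition probabilities of the (lazy) simple random walk on `ℤ^D` with
increments `yinc D d u`, `u` uniform in `Fin d`. -/
noncomputable def qk (D d : ℕ) : ℕ → (Fin D → ℤ) → ℝ
  | 0 => fun x => if x = 0 then 1 else 0
  | n + 1 => fun x => (d : ℝ)⁻¹ * ∑ u : Fin d, qk D d n (x - yinc D d u)

/-- The pairing `θ · x`. -/
noncomputable def dotp {D : ℕ} (θ : Fin D → ℝ) (x : Fin D → ℤ) : ℝ := ∑ j, θ j * (x j : ℝ)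

/-- The characteristic function of one increment; it is real by symmetry. -/
noncomputable def chf (D d : ℕ) (θ : Fin D → ℝ) : ℝ :=
  (d : ℝ)⁻¹ * ∑ u : Fin d, Real.cos (dotp θ (yinc D d u))

/-- Lebesgue measure on the torus `(-π, π]^D`. -/
noncomputable def lam (D : ℕ) : Measure (Fin D → ℝ) :=
  Measure.pi (fun _ : Fin D => (volume : Measure ℝ).restrict (Ioc (-Real.pi) Real.pi))

instance (D : ℕ) : IsFiniteMeasure (lam D) := by unfold lam; infer_instance

lemma dotp_cont {D : ℕ} (x : Fin D → ℤ) : Continuous (fun θ : Fin D → ℝ => dotp θ x) := by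
  unfold dotp; fun_prop

lemma chf_cont (D d : ℕ) : Continuous (chf D d) := by
  unfold chf
  have := fun u : Fin d => dotp_cont (yinc D d u)
  fun_prop

lemma dotp_neg {D : ℕ} (θ : Fin D → ℝ) (x : Fin D → ℤ) : dotp θ (-x) = - dotp θ x := by
  simp [dotp]

lemma dotp_sub {D : ℕ} (θ : Fin D → ℝ) (x y : Fin D → ℤ) :
    dotp θ (x - y) = dotp θ x - dotp θ y := by
  simp [dotp, mul_sub, Finset.sum_sub_distrib]

/-- One step of the projected walk multiplies its characteristic function by `chf`: the sine part of
the addition formula cancels because paired directions have opposite increments. -/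
lemma sum_cos {D d : ℕ} (h : 2 * D ≤ d) (θ : Fin D → ℝ) (x : Fin D → ℤ) :
    (d : ℝ)⁻¹ * ∑ u : Fin d, Real.cos (dotp θ (x - yinc D d u))
      = Real.cos (dotp θ x) * chf D d θ := by
  have h1 : ∑ u : Fin d, Real.sin (dotp θ (yinc D d u)) = 0 := by
    have h2 : ∑ u : Fin d, Real.sin (dotp θ (yinc D d u))
        = ∑ u : Fin d, Real.sin (dotp θ (yinc D d (partner h u))) :=
      (Equiv.sum_comp (partnerEquiv h) (fun u => Real.sin (dotp θ (yinc D d u)))).symm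
    simp only [yinc_partner, dotp_neg, Real.sin_neg, Finset.sum_neg_distrib] at h2
    linarith
  simp only [dotp_sub, Real.cos_sub, Finset.sum_add_distrib, ← Finset.mul_sum, h1, chf]
  ring

/-- Decay of the characteristic function. It follows from `|cos t| ≤ 1 - sin² t / 2`, keeping only the
directions `u < D`, whose increments are the unit vectors of `ℤ^D`. -/
lemma abs_chf_le {D d : ℕ} (hd : 0 < d) (h : 2 * D ≤ d) (θ : Fin D → ℝ) :
    |chf D d θ| ≤ Real.exp (-(1 / (2 * d)) * ∑ j, Real.sin (θ j) ^ 2) := by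
  have hcos : ∀ t : ℝ, |Real.cos t| ≤ 1 - Real.sin t ^ 2 / 2 := by
    intro t
    have h1 := Real.sin_sq_add_cos_sq t
    have h2 : Real.cos t ^ 2 = |Real.cos t| ^ 2 := (sq_abs _).symm
    nlinarith [sq_nonneg (|Real.cos t| - 1)]
  have hd' : (0 : ℝ) < d := by exact_mod_cast hd
  have hsum : ∑ j : Fin D, Real.sin (θ j) ^ 2
      ≤ ∑ u : Fin d, Real.sin (dotp θ (yinc D d u)) ^ 2 := by
    have hinj : Function.Injective (fun j : Fin D => (⟨j.1, by omega⟩ : Fin d)) := by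
      intro a b hab
      simpa [Fin.ext_iff] using hab
    calc ∑ j : Fin D, Real.sin (θ j) ^ 2
        = ∑ j : Fin D, Real.sin (dotp θ (yinc D d ⟨j.1, by omega⟩)) ^ 2 := by
          apply Finset.sum_congr rfl
          intro j _
          congr 2
          unfold dotp yinc
          rw [Finset.sum_eq_single j]
          · simp
          · intro b _ hb
            have : ¬ (j.1 = b.1) := fun hh => hb (Fin.ext hh.symm)
            have h2 : ¬ (j.1 = b.1 + D) := by omega
            simp [this, h2]
          · simp
      _ = ∑ u ∈ Finset.univ.image (fun j : Fin D => (⟨j.1, by omega⟩ : Fin d)),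
            Real.sin (dotp θ (yinc D d u)) ^ 2 := by
          rw [Finset.sum_image (fun a _ b _ hab => hinj hab)]
      _ ≤ _ := Finset.sum_le_sum_of_subset_of_nonneg (Finset.subset_univ _)
            (fun _ _ _ => sq_nonneg _)
  have h3 : |chf D d θ| ≤ 1 - (1 / (2 * d)) * ∑ j, Real.sin (θ j) ^ 2 := by
    calc |chf D d θ| ≤ (d : ℝ)⁻¹ * ∑ u : Fin d, |Real.cos (dotp θ (yinc D d u))| := by
          unfold chf
          rw [abs_mul, abs_of_pos (inv_pos.2 hd')]
          gcongr
          exact Finset.abs_sum_le_sum_abs _ _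
      _ ≤ (d : ℝ)⁻¹ * ∑ u : Fin d, (1 - Real.sin (dotp θ (yinc D d u)) ^ 2 / 2) := by
          gcongr
          exact hcos _
      _ = 1 - (1 / (2 * d)) * ∑ u : Fin d, Real.sin (dotp θ (yinc D d u)) ^ 2 := by
          rw [Finset.sum_sub_distrib, ← Finset.sum_div]
          simp only [Finset.sum_const, Finset.card_univ, Fintype.card_fin, nsmul_eq_mul, mul_one]
          field_simp
      _ ≤ _ := by
          gcongr
  refine h3.trans ?_
  have := Real.add_one_le_exp (-(1 / (2 * (d : ℝ))) * ∑ j, Real.sin (θ j) ^ 2)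
  linarith

/-- Orthogonality of the characters of the torus. -/
lemma integral_cos {D : ℕ} (x : Fin D → ℤ) :
    ∫ θ, Real.cos (dotp θ x) ∂(lam D) = if x = 0 then (2 * Real.pi) ^ D else 0 := by
  have hpi := Real.pi_pos
  have h1 : ∀ n : ℤ, ∫ t in Ioc (-Real.pi) Real.pi, Complex.exp (Complex.I * (t * (n : ℝ) : ℝ))
      = if n = 0 then (2 * Real.pi : ℂ) else 0 := by
    intro n
    rw [← intervalIntegral.integral_of_le (by linarith)]
    split_ifs with hn
    · subst hn
      simp
      ring
    · have hn' : (Complex.I * n : ℂ) ≠ 0 := by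
        simp [hn]
      have h2 : ∀ t : ℝ, Complex.exp (Complex.I * (t * (n : ℝ) : ℝ))
          = Complex.exp ((Complex.I * n) * t) := by
        intro t; congr 1; push_cast; ring
      simp only [h2]
      rw [integral_exp_mul_complex hn']
      have h3 : Complex.exp (Complex.I * n * (Real.pi : ℝ))
          = Complex.exp (Complex.I * n * (-Real.pi : ℝ)) := by
        rw [Complex.exp_eq_exp_iff_exists_int]
        exact ⟨n, by push_cast; ring⟩
      rw [h3, sub_self, zero_div]
  have h2 : ∫ θ, Complex.exp (Complex.I * (dotp θ x : ℝ)) ∂(lam D)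
      = if x = 0 then ((2 * Real.pi : ℝ) : ℂ) ^ D else 0 := by
    have h3 : ∀ θ : Fin D → ℝ, Complex.exp (Complex.I * (dotp θ x : ℝ))
        = ∏ j, Complex.exp (Complex.I * (θ j * (x j : ℝ) : ℝ)) := by
      intro θ
      rw [← Complex.exp_sum, ← Finset.mul_sum]
      congr 2
      simp [dotp]
    simp only [h3]
    unfold lam
    rw [integral_fintype_prod_eq_prod (𝕜 := ℂ)
      (f := fun j (t : ℝ) => Complex.exp (Complex.I * (t * (x j : ℝ) : ℝ)))]
    simp only [h1]
    split_ifs with hx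
    · subst hx; simp
    · obtain ⟨j, hj⟩ := Function.ne_iff.1 hx
      exact Finset.prod_eq_zero (Finset.mem_univ j) (by simpa using hj)
  have h4 : ∀ θ : Fin D → ℝ,
      Real.cos (dotp θ x) = RCLike.re (Complex.exp (Complex.I * (dotp θ x : ℝ))) := by
    intro θ
    rw [mul_comm]
    exact (Complex.exp_ofReal_mul_I_re _).symm
  simp only [h4]
  rw [integral_re, h2]
  · split_ifs
    · rw [← Complex.ofReal_pow]; rfl
    · simp
  · refine Integrable.of_bound (C := 1) ?_ ?_
    · apply Continuous.aestronglyMeasurable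
      have := dotp_cont x
      fun_prop
    · refine Eventually.of_forall fun θ => ?_
      rw [mul_comm, Complex.norm_exp_ofReal_mul_I]

lemma abs_chf_le_one {D d : ℕ} (hd : 0 < d) (h : 2 * D ≤ d) (θ : Fin D → ℝ) :
    |chf D d θ| ≤ 1 := by
  refine (abs_chf_le hd h θ).trans (Real.exp_le_one_iff.2 ?_)
  have : 0 ≤ ∑ j, Real.sin (θ j) ^ 2 := Finset.sum_nonneg fun _ _ => sq_nonneg _
  have h2 : (0 : ℝ) ≤ 1 / (2 * d) := by positivity
  nlinarith

lemma integrable_chf {D d : ℕ} (hd : 0 < d) (h : 2 * D ≤ d) (n : ℕ) (x : Fin D → ℤ) :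
    Integrable (fun θ => Real.cos (dotp θ x) * chf D d θ ^ n) (lam D) := by
  refine Integrable.of_bound (C := 1) ?_ ?_
  · apply Continuous.aestronglyMeasurable
    have := dotp_cont x
    have := chf_cont D d
    fun_prop
  · refine Eventually.of_forall fun θ => ?_
    rw [Real.norm_eq_abs, abs_mul, abs_pow]
    exact mul_le_one₀ (Real.abs_cos_le_one _) (by positivity)
      (pow_le_one₀ (abs_nonneg _) (abs_chf_le_one hd h θ))

/-- Fourier inversion for the projected walk. -/
lemma qk_eq {D d : ℕ} (hd : 0 < d) (h : 2 * D ≤ d) (n : ℕ) (x : Fin D → ℤ) :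
    qk D d n x = ((2 * Real.pi) ^ D)⁻¹ * ∫ θ, Real.cos (dotp θ x) * chf D d θ ^ n ∂(lam D) := by
  have hpi := Real.pi_pos
  induction n generalizing x with
  | zero =>
    simp only [pow_zero, mul_one, integral_cos, qk]
    split_ifs
    · field_simp
    · simp
  | succ n ih =>
    simp only [qk, ih]
    rw [← Finset.mul_sum, ← integral_finsetSum _ (fun u _ => integrable_chf hd h n _),
      mul_left_comm, ← integral_const_mul]
    congr 1
    apply integral_congr_ae
    refine Eventually.of_forall fun θ => ?_
    simp only
    rw [← Finset.sum_mul, ← mul_assoc, sum_cos h, pow_succ]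
    ring

/-- Since `|sin|` dominates `2/π` times the distance to `π ℤ`, the integrand is bounded on `(-π, π]` by
the sum of three Gaussians, centred at `0`, `π` and `-π`. -/
lemma integral_exp_sin (a : ℝ) (ha : 0 < a) :
    ∫ t in Ioc (-Real.pi) Real.pi, Real.exp (-a * Real.sin t ^ 2)
      ≤ 3 * √(Real.pi / (a * (2 / Real.pi) ^ 2)) := by
  have hpi := Real.pi_pos
  set b := a * (2 / Real.pi) ^ 2 with hb
  have hb0 : 0 < b := by positivity
  have hI : Integrable (fun t : ℝ => Real.exp (-b * t ^ 2)) := integrable_exp_neg_mul_sq hb0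
  have hI1 : Integrable (fun t : ℝ => Real.exp (-b * (t - Real.pi) ^ 2)) :=
    hI.comp_sub_right Real.pi
  have hI2 : Integrable (fun t : ℝ => Real.exp (-b * (t + Real.pi) ^ 2)) :=
    hI.comp_add_right Real.pi
  have key : ∀ s : ℝ, |s| ≤ Real.pi / 2 →
      Real.exp (-a * Real.sin s ^ 2) ≤ Real.exp (-b * s ^ 2) := by
    intro s hs
    apply Real.exp_le_exp.2
    have h1 := Real.mul_abs_le_abs_sin hs
    have h2 : (2 / Real.pi * |s|) ^ 2 ≤ |Real.sin s| ^ 2 := by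
      gcongr
    rw [mul_pow, sq_abs, sq_abs] at h2
    rw [hb]
    nlinarith
  calc ∫ t in Ioc (-Real.pi) Real.pi, Real.exp (-a * Real.sin t ^ 2)
      ≤ ∫ t in Ioc (-Real.pi) Real.pi, (Real.exp (-b * t ^ 2)
          + Real.exp (-b * (t - Real.pi) ^ 2) + Real.exp (-b * (t + Real.pi) ^ 2)) := by
        refine setIntegral_mono_on ?_ ((hI.add hI1).add hI2).integrableOn measurableSet_Ioc ?_
        · refine Integrable.of_bound (C := 1) ?_ ?_
          · apply Continuous.aestronglyMeasurable
            fun_prop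
          · refine Eventually.of_forall fun θ => ?_
            rw [Real.norm_eq_abs, abs_of_pos (Real.exp_pos _), Real.exp_le_one_iff]
            nlinarith [sq_nonneg (Real.sin θ)]
        · intro t ht
          have e1 := Real.exp_pos (-b * t ^ 2)
          have e2 := Real.exp_pos (-b * (t - Real.pi) ^ 2)
          have e3 := Real.exp_pos (-b * (t + Real.pi) ^ 2)
          rcases le_or_gt t (-(Real.pi / 2)) with h1 | h1
          · have := key (t + Real.pi) (abs_le.2 ⟨by linarith [ht.1], by linarith⟩)
            rw [Real.sin_add_pi, neg_sq] at this
            linarith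
          · rcases le_or_gt t (Real.pi / 2) with h2 | h2
            · have := key t (abs_le.2 ⟨h1.le, h2⟩)
              linarith
            · have := key (t - Real.pi) (abs_le.2 ⟨by linarith, by linarith [ht.2]⟩)
              rw [Real.sin_sub_pi, neg_sq] at this
              linarith
    _ ≤ ∫ t, (Real.exp (-b * t ^ 2)
          + Real.exp (-b * (t - Real.pi) ^ 2) + Real.exp (-b * (t + Real.pi) ^ 2)) := by
        refine setIntegral_le_integral ((hI.add hI1).add hI2) ?_
        exact Eventually.of_forall fun t => by positivity
    _ = 3 * √(Real.pi / b) := by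
        have hI12 : Integrable (fun t : ℝ => Real.exp (-b * t ^ 2)
            + Real.exp (-b * (t - Real.pi) ^ 2)) := hI.add hI1
        rw [integral_add hI12 hI2, integral_add hI hI1,
          integral_sub_right_eq_self (fun t : ℝ => Real.exp (-b * t ^ 2)),
          integral_add_right_eq_self (fun t : ℝ => Real.exp (-b * t ^ 2)), integral_gaussian]
        ring

/-- The heat kernel bound `sup_x P(Y_n = x) ≤ C n^{-D/2}`. -/
lemma qk_le {D d : ℕ} (hd : 0 < d) (h : 2 * D ≤ d) :
    ∃ C : ℝ, 0 < C ∧ ∀ n : ℕ, 0 < n → ∀ x, qk D d n x ≤ C * ((√n)⁻¹) ^ D := by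
  have hpi := Real.pi_pos
  have hd' : (0 : ℝ) < d := by exact_mod_cast hd
  refine ⟨((2 * Real.pi) ^ D)⁻¹ * (3 * √(Real.pi / ((1 / (2 * d)) * (2 / Real.pi) ^ 2))) ^ D,
    by positivity, fun n hn x => ?_⟩
  have hn' : (0 : ℝ) < n := by exact_mod_cast hn
  rw [qk_eq hd h, mul_assoc]
  refine mul_le_mul_of_nonneg_left ?_ (by positivity)
  have hI : Integrable (fun θ : Fin D → ℝ => ∏ j, Real.exp (-(n * (1 / (2 * d))) * Real.sin (θ j) ^ 2))
      (lam D) := by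
    refine Integrable.of_bound (C := 1) ?_ ?_
    · apply Continuous.aestronglyMeasurable
      fun_prop
    · refine Eventually.of_forall fun θ => ?_
      rw [Real.norm_eq_abs, abs_of_pos (Finset.prod_pos fun _ _ => Real.exp_pos _)]
      refine Finset.prod_le_one (fun _ _ => (Real.exp_pos _).le) fun j _ => ?_
      rw [Real.exp_le_one_iff]
      have : (0 : ℝ) ≤ n * (1 / (2 * d)) := by positivity
      nlinarith [sq_nonneg (Real.sin (θ j))]
  calc ∫ θ, Real.cos (dotp θ x) * chf D d θ ^ n ∂(lam D)
      ≤ ∫ θ, ∏ j, Real.exp (-(n * (1 / (2 * d))) * Real.sin (θ j) ^ 2) ∂(lam D) := by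
        refine integral_mono (integrable_chf hd h n x) hI fun θ => ?_
        simp only
        refine (le_abs_self _).trans ?_
        rw [abs_mul, abs_pow]
        calc |Real.cos (dotp θ x)| * |chf D d θ| ^ n ≤ 1 * |chf D d θ| ^ n := by
              gcongr
              exact Real.abs_cos_le_one _
          _ ≤ 1 * Real.exp (-(1 / (2 * d)) * ∑ j, Real.sin (θ j) ^ 2) ^ n := by
              gcongr
              exact abs_chf_le hd h θ
          _ = _ := by
              rw [one_mul, ← Real.exp_nat_mul, ← Real.exp_sum, ← Finset.mul_sum]
              congr 1
              ring
    _ = ∏ _j : Fin D, ∫ t in Ioc (-Real.pi) Real.pi,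
          Real.exp (-(n * (1 / (2 * d))) * Real.sin t ^ 2) := by
        unfold lam
        rw [integral_fintype_prod_eq_prod (𝕜 := ℝ)
          (f := fun _ (t : ℝ) => Real.exp (-(n * (1 / (2 * d))) * Real.sin t ^ 2))]
    _ ≤ ∏ _j : Fin D, (3 * √(Real.pi / ((n * (1 / (2 * d))) * (2 / Real.pi) ^ 2))) := by
        refine Finset.prod_le_prod (fun _ _ => ?_) fun _ _ => integral_exp_sin _ (by positivity)
        exact integral_nonneg fun _ => (Real.exp_pos _).le
    _ = _ := by
        rw [Finset.prod_const, Finset.card_univ, Fintype.card_fin, ← mul_pow]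
        congr 1
        rw [mul_assoc, mul_assoc, ← Real.sqrt_inv, ← Real.sqrt_mul (by positivity)]
        congr 2
        field_simp

/-! ### Independent driving sequences -/

/-- The Bernoulli law on `Bool`, realised as the law of `1{U < p}` for `U` uniform on `[0,1]`,
so that different parameters are coupled monotonically. -/
noncomputable def bern (p : unitInterval) : Measure Bool :=
  (volume : Measure unitInterval).map (fun x => decide (x < p))

lemma measurable_thr (p : unitInterval) :
    Measurable (fun x : unitInterval => (decide (x < p) : Bool)) := by
  apply measurable_to_bool
  have : (fun x : unitInterval => (decide (x < p) : Bool)) ⁻¹' {true} = Iio p := by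
    ext x; simp
  rw [this]
  exact measurableSet_Iio

instance (p : unitInterval) : IsProbabilityMeasure (bern p) :=
  Measure.isProbabilityMeasure_map (measurable_thr p).aemeasurable

lemma bern_true (p : unitInterval) : bern p {true} = ENNReal.ofReal p := by
  rw [bern, Measure.map_apply (measurable_thr p) (measurableSet_singleton _)]
  have : (fun x : unitInterval => (decide (x < p) : Bool)) ⁻¹' {true} = Iio p := by
    ext x; simp
  rw [this, unitInterval.volume_Iio]

lemma bern_false (p : unitInterval) : bern p {false} = ENNReal.ofReal (1 - p) := by
  have h1 : ({false} : Set Bool) = {true}ᶜ := by ext b; cases b <;> simp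
  rw [h1, prob_compl_eq_one_sub (measurableSet_singleton _), bern_true,
    ENNReal.ofReal_sub _ p.2.1, ENNReal.ofReal_one]

/-- The uniform law on the directions `Fin d`. -/
noncomputable def unif (d : ℕ) [NeZero d] : Measure (Fin d) :=
  (PMF.uniformOfFintype (Fin d)).toMeasure

instance (d : ℕ) [NeZero d] : IsProbabilityMeasure (unif d) := by
  unfold unif; infer_instance

lemma unif_singleton (d : ℕ) [NeZero d] (u : Fin d) : unif d {u} = (d : ℝ≥0∞)⁻¹ := by
  rw [unif, PMF.toMeasure_apply_singleton _ _ (measurableSet_singleton _)]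
  simp

/-- Driving sequences: at each time a direction and a fresh sign. -/
abbrev Drv (d : ℕ) := ℕ → Fin d × Bool

/-- The law of a single driving symbol. -/
noncomputable def kap (d : ℕ) [NeZero d] (p : unitInterval) : Measure (Fin d × Bool) :=
  (unif d).prod (bern p)

instance (d : ℕ) [NeZero d] (p : unitInterval) : IsProbabilityMeasure (kap d p) := by
  unfold kap; infer_instance

/-- The law of an i.i.d. driving sequence. -/
noncomputable def lawL (d : ℕ) [NeZero d] (p : unitInterval) : Measure (Drv d) :=
  Measure.infinitePi (fun _ : ℕ => kap d p)

instance (d : ℕ) [NeZero d] (p : unitInterval) : IsProbabilityMeasure (lawL d p) := by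
  unfold lawL; infer_instance

/-- The time shift on driving sequences. -/
def shift {d : ℕ} (n : ℕ) (w : Drv d) : Drv d := fun k => w (n + k)

lemma shift_mp (d : ℕ) [NeZero d] (p : unitInterval) (n : ℕ) :
    MeasurePreserving (shift (d := d) n) (lawL d p) (lawL d p) := by
  have hm : Measurable (shift (d := d) n) := by
    unfold shift
    fun_prop
  refine ⟨hm, ?_⟩
  unfold lawL
  refine Measure.eq_infinitePi _ fun s t ht => ?_
  rw [Measure.map_apply hm (MeasurableSet.pi s.countable_toSet fun i _ => ht i)]
  have h1 : shift (d := d) n ⁻¹' (Set.pi s t)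
      = Set.pi (s.map (addLeftEmbedding n)) (fun i => t (i - n)) := by
    ext w
    simp [Set.mem_pi, shift]
  rw [h1, Measure.infinitePi_pi _ (fun i _ => ht _), Finset.prod_map]
  simp

/-- Extend a finite configuration to a driving sequence. -/
noncomputable def extd {d : ℕ} [NeZero d] (S : Finset ℕ) (v : S → Fin d × Bool) : Drv d :=
  fun i => if h : i ∈ S then v ⟨i, h⟩ else (0, true)

/-- A function depending on finitely many symbols factors through a finite discrete space; hence its
measurability is automatic, and disjoint sets of symbols give independent functions. -/
lemma dep_factor {d : ℕ} [NeZero d] {β : Type*} {f : Drv d → β} {S : Finset ℕ}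
    (hf : DependsOn f (S : Set ℕ)) :
    f = (fun v => f (extd S v)) ∘ (fun w (i : S) => w i) := by
  funext w
  apply hf
  intro i hi
  have : i ∈ S := hi
  simp [extd, this]

lemma dep_measurable {d : ℕ} [NeZero d] {β : Type*} [MeasurableSpace β] {f : Drv d → β}
    {S : Finset ℕ} (hf : DependsOn f (S : Set ℕ)) : Measurable f := by
  rw [dep_factor hf]
  exact Measurable.of_discrete.comp (measurable_pi_lambda _ fun i => measurable_pi_apply _)

lemma dep_indep {d : ℕ} [NeZero d] (p : unitInterval) {β γ : Type*} [MeasurableSpace β]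
    [MeasurableSpace γ] {f : Drv d → β} {g : Drv d → γ} {S T : Finset ℕ} (hST : Disjoint S T)
    (hf : DependsOn f (S : Set ℕ)) (hg : DependsOn g (T : Set ℕ)) :
    ProbabilityTheory.IndepFun f g (lawL d p) := by
  have h1 : ProbabilityTheory.iIndepFun (fun (i : ℕ) (w : Drv d) => w i) (lawL d p) :=
    ProbabilityTheory.iIndepFun_infinitePi (P := fun _ => kap d p)
      (X := fun _ x => x) (fun _ => measurable_id)
  have h2 := h1.indepFun_finset S T hST (fun i => measurable_pi_apply i)
  rw [dep_factor hf, dep_factor hg]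
  exact h2.comp Measurable.of_discrete Measurable.of_discrete

lemma qk_nonneg (D d n : ℕ) (x : Fin D → ℤ) : 0 ≤ qk D d n x := by
  induction n generalizing x with
  | zero => simp only [qk]; split_ifs <;> simp
  | succ n ih =>
    simp only [qk]
    exact mul_nonneg (by positivity) (Finset.sum_nonneg fun u _ => ih _)

lemma measurable_sum_yinc (D d : ℕ) (I : Finset ℕ) :
    Measurable (fun w : Drv d => ∑ k ∈ I, yinc D d (w k).1) := by
  refine Finset.measurable_sum _ fun k _ => ?_
  exact (Measurable.of_discrete (f := yinc D d)).comp (measurable_fst.comp (measurable_pi_apply k))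

/-- Joint law of finitely many prescribed directions and of a partial sum of the projected walk
over a disjoint set of times. -/
lemma law_pin (D : ℕ) {d : ℕ} [NeZero d] (p : unitInterval) (I : Finset ℕ) :
    ∀ (S : Finset ℕ) (_ : Disjoint S I) (a : ℕ → Fin d) (x : Fin D → ℤ),
    lawL d p {w | (∀ k ∈ S, (w k).1 = a k) ∧ ∑ k ∈ I, yinc D d (w k).1 = x}
      = ENNReal.ofReal (((d : ℝ)⁻¹) ^ S.card * qk D d I.card x) := by
  have hd0 : (0 : ℝ) < d := by exact_mod_cast Nat.pos_of_ne_zero (NeZero.ne d)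
  induction I using Finset.induction_on with
  | empty =>
    intro S _ a x
    have h0 : lawL d p {w | ∀ k ∈ S, (w k).1 = a k} = ENNReal.ofReal (((d : ℝ)⁻¹) ^ S.card) := by
      have : {w : Drv d | ∀ k ∈ S, (w k).1 = a k} = Set.pi S (fun k => {a k} ×ˢ univ) := by
        ext w; simp [Set.mem_pi]
      rw [this, lawL, Measure.infinitePi_pi]
      · simp only [kap, Measure.prod_prod, unif_singleton, measure_univ, mul_one,
          Finset.prod_const]
        rw [ENNReal.ofReal_pow (by positivity), ENNReal.ofReal_inv_of_pos hd0]
        simp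
      · intro i _
        exact (measurableSet_singleton _).prod MeasurableSet.univ
    simp only [Finset.sum_empty, Finset.card_empty, qk]
    by_cases hx : x = 0
    · subst hx
      simpa using h0
    · have : ¬ (0 = x) := fun h => hx h.symm
      simp [hx, this]
  | insert k I hk ih =>
    intro S hSI a x
    rw [Finset.disjoint_insert_right] at hSI
    -- condition on the direction used at time `k`, which becomes one more prescribed direction
    have hset : {w : Drv d | (∀ j ∈ S, (w j).1 = a j) ∧
          ∑ j ∈ insert k I, yinc D d (w j).1 = x}
        = ⋃ u : Fin d, {w | (∀ j ∈ insert k S, (w j).1 = Function.update a k u j) ∧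
            ∑ j ∈ I, yinc D d (w j).1 = x - yinc D d u} := by
      ext w
      simp only [mem_ofPred_eq, mem_iUnion, Finset.sum_insert hk]
      constructor
      · rintro ⟨h1, h2⟩
        refine ⟨(w k).1, ?_, ?_⟩
        · intro j hj
          by_cases hjk : j = k
          · subst hjk; simp
          · rw [Function.update_of_ne hjk]
            exact h1 j ((Finset.mem_insert.1 hj).resolve_left hjk)
        · rw [← h2]; abel
      · rintro ⟨u, h1, h2⟩
        have hu : (w k).1 = u := by simpa using h1 k (Finset.mem_insert_self _ _)
        refine ⟨fun j hj => ?_, ?_⟩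
        · have hjk : j ≠ k := fun h => hSI.1 (h ▸ hj)
          simpa [Function.update_of_ne hjk] using h1 j (Finset.mem_insert_of_mem hj)
        · rw [h2, hu]; abel
    rw [hset, measure_iUnion]
    · have h3 : ∀ u : Fin d, lawL d p {w | (∀ j ∈ insert k S, (w j).1 = Function.update a k u j) ∧
            ∑ j ∈ I, yinc D d (w j).1 = x - yinc D d u}
          = ENNReal.ofReal (((d : ℝ)⁻¹) ^ (S.card + 1) * qk D d I.card (x - yinc D d u)) := by
        intro u
        rw [ih (insert k S) (Finset.disjoint_insert_left.2 ⟨hk, hSI.2⟩),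
          Finset.card_insert_of_notMem hSI.1]
      simp only [h3]
      rw [tsum_fintype, ← ENNReal.ofReal_sum_of_nonneg
        (fun u _ => mul_nonneg (by positivity) (qk_nonneg _ _ _ _)),
        Finset.card_insert_of_notMem hk]
      congr 1
      rw [← Finset.mul_sum]
      simp only [qk]
      ring
    · intro u v huv
      refine Set.disjoint_left.2 fun w hw hw' => huv ?_
      have h1 := hw.1 k (Finset.mem_insert_self _ _)
      have h2 := hw'.1 k (Finset.mem_insert_self _ _)
      simp only [Function.update_self] at h1 h2
      rw [← h1, ← h2]
    · intro u
      have hM : MeasurableSet {w : Drv d | ∀ j ∈ insert k S, (w j).1 = Function.update a k u j} := by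
        have : {w : Drv d | ∀ j ∈ insert k S, (w j).1 = Function.update a k u j}
            = ⋂ j ∈ insert k S, (fun w : Drv d => (w j).1) ⁻¹' {Function.update a k u j} := by
          ext w; simp
        rw [this]
        refine Finset.measurableSet_biInter _ fun j _ => ?_
        exact (measurable_fst.comp (measurable_pi_apply j)) (measurableSet_singleton _)
      have hN : MeasurableSet {w : Drv d | ∑ j ∈ I, yinc D d (w j).1 = x - yinc D d u} :=
        measurable_sum_yinc D d I (measurableSet_singleton _)
      exact hM.inter hN

/-! ### The lazily revealed walk, its projection, and cut times -/

/-- The step of the walk from a site with sign `c` when the driving direction is `u`. The use of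
`partner` on negative sites makes the projected increment independent of `c`. -/
def svec {D d : ℕ} (h : 2 * D ≤ d) (c : Bool) (u : Fin d) : Site d :=
  stepVec d (if c = true then u else partner h u, c)

/-- The first time at which the path `x` visits the site `x n`. -/
noncomputable def firstIdx {α : Type*} (x : ℕ → α) (n : ℕ) : ℕ :=
  Nat.find (p := fun k => x k = x n) ⟨n, rfl⟩

lemma firstIdx_spec {α : Type*} (x : ℕ → α) (n : ℕ) : x (firstIdx x n) = x n :=
  Nat.find_spec (p := fun k => x k = x n) ⟨n, rfl⟩

lemma firstIdx_le {α : Type*} (x : ℕ → α) (n : ℕ) : firstIdx x n ≤ n :=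
  Nat.find_min' (p := fun k => x k = x n) ⟨n, rfl⟩ rfl

lemma firstIdx_eq_iff {α : Type*} (x : ℕ → α) (n k : ℕ) :
    firstIdx x n = k ↔ x k = x n ∧ ∀ m < k, x m ≠ x n :=
  Nat.find_eq_iff (p := fun k => x k = x n) ⟨n, rfl⟩

lemma firstIdx_congr {α : Type*} (x y : ℕ → α) (n : ℕ) (h : ∀ k ≤ n, x k = y k) :
    firstIdx x n = firstIdx y n := by
  rw [firstIdx_eq_iff]
  have h1 := firstIdx_le y n
  obtain ⟨h2, h3⟩ := (firstIdx_eq_iff y n _).1 rfl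
  refine ⟨?_, fun m hm => ?_⟩
  · rw [h _ h1, h _ le_rfl, h2]
  · rw [h m (by omega), h n le_rfl]
    exact h3 m hm

/-- The walk up to time `n`, frozen afterwards. -/
noncomputable def lhist {D d : ℕ} (h : 2 * D ≤ d) (w : Drv d) : ℕ → ℕ → Site d
  | 0 => fun _ => 0
  | n + 1 => fun m => if m ≤ n then lhist h w n m
      else lhist h w n n + svec h (w (firstIdx (lhist h w n) n)).2 (w n).1

/-- The walk in an environment revealed lazily: a site first visited at time `k` carries the
sign `(w k).2`. -/
noncomputable def lwalk {D d : ℕ} (h : 2 * D ≤ d) (w : Drv d) (n : ℕ) : Site d := lhist h w n n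

section
variable {D d : ℕ} (h : 2 * D ≤ d)

lemma lhist_eq (w : Drv d) (n m : ℕ) (hm : m ≤ n) : lhist h w n m = lwalk h w m := by
  induction n with
  | zero => obtain rfl : m = 0 := by omega
            rfl
  | succ n ih =>
    rcases Nat.lt_or_ge m (n + 1) with h1 | h1
    · have : m ≤ n := by omega
      simp only [lhist, this, if_true]
      exact ih this
    · obtain rfl : m = n + 1 := by omega
      rfl

lemma lwalk_zero (w : Drv d) : lwalk h w 0 = 0 := rfl

lemma lwalk_succ (w : Drv d) (n : ℕ) :
    lwalk h w (n + 1) = lwalk h w n + svec h (w (firstIdx (lwalk h w) n)).2 (w n).1 := by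
  have h1 : firstIdx (lhist h w n) n = firstIdx (lwalk h w) n :=
    firstIdx_congr _ _ _ fun k hk => lhist_eq h w n k hk
  have h2 : ¬ (n + 1 ≤ n) := by omega
  rw [← h1]
  conv_lhs => unfold lwalk
  simp only [lhist, h2, if_false]
  rfl

/-- A path satisfying the recursion of the lazily revealed walk up to time `n` agrees with it up to
time `n`. -/
lemma lwalk_unique (w : Drv d) (x : ℕ → Site d) (n : ℕ) (h0 : x 0 = 0)
    (hx : ∀ k < n, x (k + 1) = x k + svec h (w (firstIdx x k)).2 (w k).1) :
    ∀ k ≤ n, lwalk h w k = x k := by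
  intro k
  induction k using Nat.strong_induction_on with
  | _ k ih =>
    intro hk
    rcases k with _ | k
    · rw [lwalk_zero, h0]
    · rw [lwalk_succ, hx k (by omega), ih k (by omega) (by omega),
        firstIdx_congr _ x k fun m hm => ih m (by omega) (by omega)]

/-- The walk at time `n` depends only on the first `n` symbols, since first visit times of sites left
before time `n` are themselves smaller than `n`. -/
lemma lwalk_dep (n : ℕ) : DependsOn (fun w : Drv d => lwalk h w n) (Finset.range n : Set ℕ) := by
  intro w w' hww
  have hww : ∀ k < n, w k = w' k := fun k hk => hww k (by simpa using hk)
  refine lwalk_unique h w (lwalk h w') n rfl (fun k hk => ?_) n le_rfl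
  have := firstIdx_le (lwalk h w') k
  rw [lwalk_succ, hww k hk, hww _ (by omega)]

/-- The projection `ℤ^d → ℤ^D` recording the differences of paired coordinates. -/
def Yproj (x : Site d) : Fin D → ℤ :=
  fun j => x ⟨j.1, by omega⟩ - x ⟨j.1 + D, by omega⟩

lemma Yproj_zero : Yproj h (0 : Site d) = 0 := by
  funext j; simp [Yproj]

lemma Yproj_add (x y : Site d) : Yproj h (x + y) = Yproj h x + Yproj h y := by
  funext j; simp only [Yproj, Pi.add_apply]; ring

lemma Yproj_neg (x : Site d) : Yproj h (-x) = -Yproj h x := by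
  funext j; simp only [Yproj, Pi.neg_apply]; ring

lemma Yproj_single (u : Fin d) : Yproj h (Pi.single u 1) = yinc D d u := by
  funext j
  have := j.2
  simp only [Yproj, yinc, Pi.single_apply, Fin.ext_iff]
  split_ifs <;> simp at * <;> omega

lemma Yproj_svec (c : Bool) (u : Fin d) : Yproj h (svec h c u) = yinc D d u := by
  cases c
  · simp [svec, stepVec, Yproj_neg, Yproj_single, yinc_partner]
  · simp [svec, stepVec, Yproj_single]

/-- The projected walk, a (lazy) simple random walk on `ℤ^D`. -/
def Ywalk (D : ℕ) {d : ℕ} (w : Drv d) (n : ℕ) : Fin D → ℤ :=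
  ∑ k ∈ Finset.range n, yinc D d (w k).1

/-- The projection forgets the environment: both signs produce the same projected increment. -/
lemma Yproj_lwalk (w : Drv d) (n : ℕ) : Yproj h (lwalk h w n) = Ywalk D w n := by
  induction n with
  | zero => simp [lwalk_zero, Yproj_zero, Ywalk]
  | succ n ih => rw [lwalk_succ, Yproj_add, ih, Yproj_svec, Ywalk, Ywalk, Finset.sum_range_succ]

/-- `T` is a cut time: the projected walk before `T` avoids the projected walk from `T` on. -/
def IsCut (D : ℕ) {d : ℕ} (w : Drv d) (T : ℕ) : Prop :=
  ∀ i < T, ∀ j ≥ T, Ywalk D w i ≠ Ywalk D w j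

lemma Ywalk_shift (w : Drv d) (n m : ℕ) :
    Ywalk D w (n + m) = Ywalk D w n + Ywalk D (shift n w) m := by
  simp [Ywalk, Finset.sum_range_add, shift]

lemma IsCut.shift {w : Drv d} {T n : ℕ} (hT : IsCut D w (n + T)) : IsCut D (shift n w) T := by
  intro i hi j hj hij
  refine hT (n + i) (by omega) (n + j) (by omega) ?_
  rw [Ywalk_shift, Ywalk_shift, hij]

/-- After a cut time the walk only sees fresh sites, so that its increments are those of the walk
driven by the shifted sequence. -/
lemma lwalk_cut {w : Drv d} {T : ℕ} (hT : IsCut D w T) (j : ℕ) :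
    lwalk h w (T + j) = lwalk h w T + lwalk h (shift T w) j := by
  have := lwalk_unique h (shift T w) (fun j => lwalk h w (T + j) - lwalk h w T) j (by simp)
    (fun k _ => ?_) j le_rfl
  · rw [this]; abel
  · have hf : firstIdx (lwalk h w) (T + k)
        = T + firstIdx (fun j => lwalk h w (T + j) - lwalk h w T) k := by
      rw [firstIdx_eq_iff]
      obtain ⟨h2, h3⟩ := (firstIdx_eq_iff (fun j => lwalk h w (T + j) - lwalk h w T) k _).1 rfl
      refine ⟨sub_left_inj.1 h2, fun m hm => ?_⟩
      rcases Nat.lt_or_ge m T with h4 | h4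
      -- a site seen after the cut time has not been visited before it
      · intro h5
        refine hT m h4 (T + k) (by omega) ?_
        rw [← Yproj_lwalk h, ← Yproj_lwalk h, h5]
      · obtain ⟨m, rfl⟩ := Nat.exists_eq_add_of_le h4
        intro h5
        exact h3 m (by omega) (sub_left_inj.2 h5)
    have e : T + (k + 1) = T + k + 1 := by ring
    simp only [e]
    rw [lwalk_succ, hf]
    simp only [shift]
    abel

lemma abs_svec_le (c : Bool) (u : Fin d) (i : Fin d) : |svec h c u i| ≤ 1 := by
  unfold svec stepVec
  split_ifs <;> simp only [Pi.single_apply, Pi.neg_apply] <;> split_ifs <;> simp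

lemma lwalk_lip (w : Drv d) (n m : ℕ) (i : Fin d) :
    |lwalk h w (n + m) i - lwalk h w n i| ≤ m := by
  induction m with
  | zero => simp
  | succ m ih =>
    rw [← add_assoc, lwalk_succ]
    have := abs_svec_le h (w (firstIdx (lwalk h w) (n + m))).2 (w (n + m)).1 i
    simp only [Pi.add_apply]
    push_cast
    rw [abs_le] at *
    constructor <;> linarith [this.1, this.2, ih.1, ih.2]

end

/-! ### Intersections of the projected walk -/

/-- The decay `m^{-5/2}` of the heat kernel in dimension five. -/
noncomputable def gdec (m : ℕ) : ℝ := ((√(m : ℝ))⁻¹) ^ 5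

lemma gdec_nonneg (m : ℕ) : 0 ≤ gdec m := by unfold gdec; positivity

/-- The exponent `5/2` is split as `1/4 + 9/8 + 9/8`: the first part is bounded by its value at `M`,
and the other two are summable in `a` and in `b`. -/
lemma gdec_split (M a b : ℕ) (hM : 0 < M) (hab : M ≤ a + b + 1) :
    gdec (a + b + 1) ≤ (M : ℝ) ^ (-(1 / 4 : ℝ)) *
      (((a : ℝ) + 1) ^ (-(9 / 8 : ℝ)) * ((b : ℝ) + 1) ^ (-(9 / 8 : ℝ))) := by
  have hM' : (0 : ℝ) < M := by exact_mod_cast hM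
  have hx : (0 : ℝ) < (a : ℝ) + b + 1 := by positivity
  have hMx : (M : ℝ) ≤ (a : ℝ) + b + 1 := by exact_mod_cast hab
  have h1 : gdec (a + b + 1) = ((a : ℝ) + b + 1) ^ (-(1 / 4 : ℝ)) *
      (((a : ℝ) + b + 1) ^ (-(9 / 8 : ℝ)) * ((a : ℝ) + b + 1) ^ (-(9 / 8 : ℝ))) := by
    rw [← Real.rpow_add hx, ← Real.rpow_add hx]
    unfold gdec
    push_cast
    rw [Real.sqrt_eq_rpow, ← Real.rpow_neg hx.le, ← Real.rpow_natCast, ← Real.rpow_mul hx.le]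
    norm_num
  rw [h1]
  have ha : (0 : ℝ) ≤ a := Nat.cast_nonneg a
  have hb : (0 : ℝ) ≤ b := Nat.cast_nonneg b
  gcongr ?_ * (?_ * ?_)
  · exact Real.rpow_le_rpow_of_nonpos hM' hMx (by norm_num)
  · exact Real.rpow_le_rpow_of_nonpos (by positivity) (by linarith) (by norm_num)
  · exact Real.rpow_le_rpow_of_nonpos (by positivity) (by linarith) (by norm_num)

/-- The sum of `(j - i)^{-5/2}` over pairs `i < t ≤ j` with `j - i ≥ M` is `O(M^{-1/4})`. -/
lemma tsum_gdec : ∃ C : ℝ, 0 < C ∧ ∀ M : ℕ, 0 < M →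
    ∑' ab : ℕ × ℕ, (if M ≤ ab.1 + ab.2 + 1 then ENNReal.ofReal (gdec (ab.1 + ab.2 + 1)) else 0)
      ≤ ENNReal.ofReal (C * (M : ℝ) ^ (-(1 / 4 : ℝ))) := by
  have hs : Summable (fun a : ℕ => ((a : ℝ) + 1) ^ (-(9 / 8 : ℝ))) := by
    have := (summable_nat_add_iff 1).2 (Real.summable_nat_rpow (p := -(9 / 8 : ℝ)) |>.2 (by norm_num))
    simpa using this
  set S := ∑' a : ℕ, ((a : ℝ) + 1) ^ (-(9 / 8 : ℝ)) with hS
  have hnn : ∀ a : ℕ, 0 ≤ ((a : ℝ) + 1) ^ (-(9 / 8 : ℝ)) := fun a => by positivity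
  have hS0 : 0 < S := hs.tsum_pos hnn 0 (by positivity)
  refine ⟨S * S, by positivity, fun M hM => ?_⟩
  calc _ ≤ ∑' ab : ℕ × ℕ, ENNReal.ofReal ((M : ℝ) ^ (-(1 / 4 : ℝ))) *
        (ENNReal.ofReal (((ab.1 : ℝ) + 1) ^ (-(9 / 8 : ℝ))) *
          ENNReal.ofReal (((ab.2 : ℝ) + 1) ^ (-(9 / 8 : ℝ)))) := by
        refine ENNReal.tsum_le_tsum fun ab => ?_
        split_ifs with hab
        · rw [← ENNReal.ofReal_mul (hnn _), ← ENNReal.ofReal_mul (by positivity)]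
          exact ENNReal.ofReal_le_ofReal (gdec_split M _ _ hM hab)
        · exact zero_le
    _ = ENNReal.ofReal ((M : ℝ) ^ (-(1 / 4 : ℝ))) * (ENNReal.ofReal S * ENNReal.ofReal S) := by
        rw [ENNReal.tsum_mul_left, ENNReal.tsum_prod']
        simp only [ENNReal.tsum_mul_left, ENNReal.tsum_mul_right]
        rw [← ENNReal.ofReal_tsum_of_nonneg hnn hs]
    _ = _ := by
        rw [← ENNReal.ofReal_mul hS0.le, ← ENNReal.ofReal_mul (by positivity), mul_comm]

/-- Union bound over the self-intersections of the projected walk across time `t` with time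
difference at least `M`. -/
lemma meet_union {d : ℕ} (m : Measure (Drv d)) (F : Set (Drv d)) (t M : ℕ) (κ : ℝ≥0∞) (C C3 : ℝ)
    (hC : 0 ≤ C) (hM : 0 < M)
    (h3 : ∑' ab : ℕ × ℕ, (if M ≤ ab.1 + ab.2 + 1 then ENNReal.ofReal (gdec (ab.1 + ab.2 + 1)) else 0)
      ≤ ENNReal.ofReal (C3 * (M : ℝ) ^ (-(1 / 4 : ℝ))))
    (hF : ∀ i < t, ∀ j ≥ t, M ≤ j - i →
      m (F ∩ {w | Ywalk 5 w i = Ywalk 5 w j}) ≤ κ * ENNReal.ofReal (C * gdec (j - i))) :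
    m (F ∩ {w | ∃ i < t, ∃ j ≥ t, M ≤ j - i ∧ Ywalk 5 w i = Ywalk 5 w j})
      ≤ κ * ENNReal.ofReal (C * C3 * (M : ℝ) ^ (-(1 / 4 : ℝ))) := by
  have hsub : F ∩ {w | ∃ i < t, ∃ j ≥ t, M ≤ j - i ∧ Ywalk 5 w i = Ywalk 5 w j}
      ⊆ ⋃ ab : ℕ × ℕ, (if M ≤ ab.1 + ab.2 + 1 ∧ ab.1 < t then
          F ∩ {w | Ywalk 5 w (t - 1 - ab.1) = Ywalk 5 w (t + ab.2)} else ∅) := by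
    rintro w ⟨hw, i, hi, j, hj, hMj, hij⟩
    refine mem_iUnion.2 ⟨(t - 1 - i, j - t), ?_⟩
    have h1 : M ≤ t - 1 - i + (j - t) + 1 ∧ t - 1 - i < t := by omega
    have h2 : t - 1 - (t - 1 - i) = i := by omega
    have h4 : t + (j - t) = j := by omega
    simp only [h1, and_self, if_true, h2, h4]
    exact ⟨hw, hij⟩
  refine (measure_mono hsub).trans ((measure_iUnion_le _).trans ?_)
  calc _ ≤ ∑' ab : ℕ × ℕ, κ * (ENNReal.ofReal C *
        (if M ≤ ab.1 + ab.2 + 1 then ENNReal.ofReal (gdec (ab.1 + ab.2 + 1)) else 0)) := by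
        refine ENNReal.tsum_le_tsum fun ab => ?_
        by_cases h1 : M ≤ ab.1 + ab.2 + 1
        · by_cases h2 : ab.1 < t
          · have h4 : t + ab.2 - (t - 1 - ab.1) = ab.1 + ab.2 + 1 := by omega
            have := hF (t - 1 - ab.1) (by omega) (t + ab.2) (by omega) (by omega)
            rw [h4, ENNReal.ofReal_mul hC] at this
            simpa [h1, h2] using this
          · simp [h2]
        · simp [h1]
    _ ≤ κ * (ENNReal.ofReal C * ENNReal.ofReal (C3 * (M : ℝ) ^ (-(1 / 4 : ℝ)))) := by
        rw [ENNReal.tsum_mul_left, ENNReal.tsum_mul_left]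
        gcongr
    _ = _ := by rw [← ENNReal.ofReal_mul hC, mul_assoc]

lemma Ywalk_sub {D d : ℕ} (w : Drv d) (i j : ℕ) (hij : i ≤ j) :
    Ywalk D w j - Ywalk D w i = ∑ k ∈ Finset.Ico i j, yinc D d (w k).1 := by
  rw [Finset.sum_Ico_eq_sub _ hij]; rfl

/-- The law of a sum of increments over any finite set of times depends on its cardinality only. -/
lemma law_sum (D : ℕ) {d : ℕ} [NeZero d] (p : unitInterval) (I : Finset ℕ) (x : Fin D → ℤ) :
    lawL d p {w | ∑ k ∈ I, yinc D d (w k).1 = x} = ENNReal.ofReal (qk D d I.card x) := by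
  have := law_pin D p I ∅ (Finset.disjoint_empty_left _) (fun _ => (0 : Fin d)) x
  simpa using this

lemma meet_le {d : ℕ} [NeZero d] (p : unitInterval) (C : ℝ)
    (hC : ∀ n : ℕ, 0 < n → ∀ x, qk 5 d n x ≤ C * ((√n)⁻¹) ^ 5) (i j : ℕ) (hij : i < j) :
    lawL d p {w | Ywalk 5 w i = Ywalk 5 w j} ≤ ENNReal.ofReal (C * gdec (j - i)) := by
  have : {w : Drv d | Ywalk 5 w i = Ywalk 5 w j}
      = {w | ∑ k ∈ Finset.Ico i j, yinc 5 d (w k).1 = 0} := by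
    ext w
    simp only [mem_ofPred_eq, ← Ywalk_sub w i j hij.le, sub_eq_zero, eq_comm]
  rw [this, law_sum]
  refine ENNReal.ofReal_le_ofReal ?_
  have := hC (j - i) (by omega) 0
  simpa [gdec] using this

/-- Each coordinate of the projected walk changes by at most one per step. -/
lemma qk_support (D d n : ℕ) (x : Fin D → ℤ) (j : Fin D) (hx : (n : ℤ) < |x j|) :
    qk D d n x = 0 := by
  induction n generalizing x with
  | zero =>
    have : x ≠ 0 := fun h => by simp [h] at hx
    simp [qk, this]
  | succ n ih =>
    simp only [qk]
    rw [Finset.sum_eq_zero, mul_zero]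
    intro u _
    apply ih
    have h1 : |yinc D d u j| ≤ 1 := by
      unfold yinc; split_ifs <;> simp
    have h2 := abs_sub_abs_le_abs_sub (x j) (yinc D d u j)
    push_cast at hx
    simp only [Pi.sub_apply]
    linarith

/-- Intersection bound on the event that the projected walk moves straight during
`[t - r, t + r)`. -/
lemma straight_meet {d : ℕ} [NeZero d] (p : unitInterval) (C : ℝ) (hC0 : 0 < C)
    (hC : ∀ n : ℕ, 0 < n → ∀ x, qk 5 d n x ≤ C * ((√n)⁻¹) ^ 5) (r t : ℕ) (hr : 0 < r) (hrt : r ≤ t)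
    (i j : ℕ) (hi : i < t) (hj : t ≤ j) :
    lawL d p ({w | ∀ k ∈ Finset.Ico (t - r) (t + r), (w k).1 = 0} ∩
        {w | Ywalk 5 w i = Ywalk 5 w j}) ≤
      (if j - i < r then 0 else
        ENNReal.ofReal (((d : ℝ)⁻¹) ^ (2 * r)) * ENNReal.ofReal ((32 * C) * gdec (j - i))) := by
  set S := Finset.Ico (t - r) (t + r) with hS
  set I := Finset.Ico i j \ S with hI
  set s := (Finset.Ico i j ∩ S).card with hs
  have hcard : s + I.card = j - i := by
    have := Finset.card_inter_add_card_sdiff (Finset.Ico i j) S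
    rw [Nat.card_Ico] at this
    exact this
  have hScard : S.card = 2 * r := by
    rw [hS, Nat.card_Ico]; omega
  have hs1 : 1 ≤ s := by
    rw [hs, Nat.one_le_iff_ne_zero, Finset.card_ne_zero]
    exact ⟨t - 1, by simp [hS]; omega⟩
  -- the `s` straight steps inside `[i, j)` have to be compensated by the remaining steps, indexed by `I`
  set x0 : Fin 5 → ℤ := -((s : ℤ) • yinc 5 d 0) with hx0
  have hsub : ({w : Drv d | ∀ k ∈ S, (w k).1 = 0} ∩ {w | Ywalk 5 w i = Ywalk 5 w j})
      ⊆ {w | (∀ k ∈ S, (w k).1 = (fun _ => (0 : Fin d)) k) ∧ ∑ k ∈ I, yinc 5 d (w k).1 = x0} := by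
    rintro w ⟨h1, h2⟩
    refine ⟨h1, ?_⟩
    have h3 := Ywalk_sub (D := 5) w i j (by omega)
    have h2' : Ywalk 5 w i = Ywalk 5 w j := h2
    rw [h2', sub_self, ← Finset.sum_inter_add_sum_sdiff _ S] at h3
    have h4 : ∑ k ∈ Finset.Ico i j ∩ S, yinc 5 d (w k).1 = (s : ℤ) • yinc 5 d 0 := by
      rw [Finset.sum_congr rfl (g := fun _ => yinc 5 d 0)]
      · simp [hs]
      · intro k hk
        rw [h1 k (Finset.mem_inter.1 hk).2]
    rw [h4] at h3
    rw [hx0]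
    exact (neg_eq_of_add_eq_zero_right h3.symm).symm
  refine (measure_mono hsub).trans ?_
  have hdisj : Disjoint S I := Finset.disjoint_sdiff
  rw [law_pin 5 p I S hdisj (fun _ => 0) x0, hScard]
  -- the straight steps move the coordinate `0` by `s`, which fewer than `s` steps cannot compensate
  have hsup : I.card < s → qk 5 d I.card x0 = 0 := by
    intro hlt
    apply qk_support 5 d _ _ 0
    have : |x0 0| = s := by
      simp [hx0, yinc]
    rw [this]
    exact_mod_cast hlt
  split_ifs with hjr
  · have : I = ∅ := by
      rw [hI, Finset.sdiff_eq_empty_iff_subset]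
      intro k hk
      simp only [hS, Finset.mem_Ico] at hk ⊢
      omega
    rw [hsup (by rw [this, Finset.card_empty]; exact hs1)]
    simp
  · rw [ENNReal.ofReal_mul (by positivity)]
    gcongr
    rcases Nat.lt_or_ge I.card s with h1 | h1
    · rw [hsup h1]
      have := gdec_nonneg (j - i)
      positivity
    · have hI0 : 0 < I.card := by omega
      refine (hC _ hI0 x0).trans ?_
      -- here `I.card ≥ (j - i) / 2`, and the factor `2` enters to the power five in the constant `32`
      have h5 : (√(I.card : ℝ))⁻¹ ≤ 2 * (√((j - i : ℕ) : ℝ))⁻¹ := by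
        have hI0' : (0 : ℝ) < I.card := by exact_mod_cast hI0
        have hji : (0 : ℝ) < (j - i : ℕ) := by
          have : 0 < j - i := by omega
          exact_mod_cast this
        have h6 : √((j - i : ℕ) : ℝ) ≤ 2 * √(I.card : ℝ) := by
          have h7 : (2 : ℝ) * √(I.card : ℝ) = √(4 * I.card) := by
            rw [Real.sqrt_mul (by norm_num), show (4 : ℝ) = 2 ^ 2 by norm_num,
              Real.sqrt_sq (by norm_num)]
          rw [h7]
          apply Real.sqrt_le_sqrt
          have : j - i ≤ 4 * I.card := by omega
          exact_mod_cast this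
        have e1 : 0 < √(I.card : ℝ) := Real.sqrt_pos.2 hI0'
        have e2 : 0 < √((j - i : ℕ) : ℝ) := Real.sqrt_pos.2 hji
        rw [← div_eq_mul_inv, inv_eq_one_div, div_le_div_iff₀ e1 e2]
        linarith
      calc C * ((√(I.card : ℝ))⁻¹) ^ 5 ≤ C * (2 * (√((j - i : ℕ) : ℝ))⁻¹) ^ 5 := by gcongr
        _ = _ := by rw [gdec, mul_pow]; ring

/-! ### Cut times are frequent -/

/-- The event that time `L` is a cut time for the projected walk restricted to `[0, 2L)`. -/
def LocCut {d : ℕ} (L : ℕ) (w : Drv d) : Prop :=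
  ∀ i < L, ∀ j, L ≤ j → j < 2 * L → Ywalk 5 w i ≠ Ywalk 5 w j

/-- The event that the projected walk has a self-intersection across time `t` with time difference
at least `L`. -/
def FarMeet {d : ℕ} (L t : ℕ) (w : Drv d) : Prop :=
  ∃ i < t, ∃ j ≥ t, L ≤ j - i ∧ Ywalk 5 w i = Ywalk 5 w j

lemma Ywalk_congr {D d : ℕ} {w w' : Drv d} {n : ℕ} (hww : ∀ k < n, w k = w' k) :
    Ywalk D w n = Ywalk D w' n :=
  Finset.sum_congr rfl fun k hk => by rw [hww k (Finset.mem_range.1 hk)]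

lemma locCut_congr {d : ℕ} {L : ℕ} {w w' : Drv d} (hww : ∀ k < 2 * L, w k = w' k) :
    LocCut L w ↔ LocCut L w' := by
  have key : ∀ i < 2 * L, Ywalk 5 w i = Ywalk 5 w' i := fun i hi =>
    Ywalk_congr fun k hk => hww k (by omega)
  constructor
  · intro hc i hi j hj hj2
    rw [← key i (by omega), ← key j hj2]
    exact hc i hi j hj hj2
  · intro hc i hi j hj hj2
    rw [key i (by omega), key j hj2]
    exact hc i hi j hj hj2

/-- A local cut is a cut unless there is an intersection across it with time difference at least `L`;
an intersection with smaller time difference lies within the window `[s, s + 2 L)`. -/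
lemma isCut_of_loc {d : ℕ} {L s : ℕ} {w : Drv d} (h1 : LocCut L (shift s w))
    (h2 : ¬ FarMeet L (s + L) w) : IsCut 5 w (s + L) := by
  intro i hi j hj hij
  by_cases h3 : L ≤ j - i
  · exact h2 ⟨i, hi, j, hj, h3, hij⟩
  · obtain ⟨i, rfl⟩ := Nat.exists_eq_add_of_le (show s ≤ i by omega)
    obtain ⟨j, rfl⟩ := Nat.exists_eq_add_of_le (show s ≤ j by omega)
    rw [Ywalk_shift, Ywalk_shift] at hij
    exact h1 i (by omega) j (by omega) (by omega) (add_left_cancel hij)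

lemma exists_heat {d : ℕ} [NeZero d] (hd : 2 * 5 ≤ d) : ∃ C : ℝ, 0 < C ∧
    ∀ n : ℕ, 0 < n → ∀ x, qk 5 d n x ≤ C * ((√n)⁻¹) ^ 5 :=
  qk_le (Nat.pos_of_ne_zero (NeZero.ne d)) hd

/-- Uniform positivity of the probability of a local cut: let the projected walk go straight near
the cut, which makes the remaining intersections unlikely. -/
lemma locCut_pos {d : ℕ} [NeZero d] (hd : 2 * 5 ≤ d) (p : unitInterval) :
    ∃ c : ℝ, 0 < c ∧ ∃ L0 : ℕ, 0 < L0 ∧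
    ∀ L ≥ L0, ENNReal.ofReal c ≤ lawL d p {w | LocCut L w} := by
  obtain ⟨C, hC0, hC⟩ := exists_heat hd
  obtain ⟨C3, hC3, h3⟩ := tsum_gdec
  have hd0 : (0 : ℝ) < d := by exact_mod_cast Nat.pos_of_ne_zero (NeZero.ne d)
  -- `r` is chosen so that far intersections have conditional probability at most one half
  obtain ⟨r, hr, hr2⟩ : ∃ r : ℕ, 0 < r ∧ 32 * C * C3 * (r : ℝ) ^ (-(1 / 4 : ℝ)) ≤ 1 / 2 := by
    have : Tendsto (fun r : ℕ => 32 * C * C3 * (r : ℝ) ^ (-(1 / 4 : ℝ))) atTop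
        (𝓝 (32 * C * C3 * 0)) :=
      ((tendsto_rpow_neg_atTop (by norm_num)).comp tendsto_natCast_atTop_atTop).const_mul _
    rw [mul_zero] at this
    obtain ⟨r, h1, h2⟩ := ((this.eventually_le_const (show (0 : ℝ) < 1 / 2 by norm_num)).and
      (eventually_gt_atTop 0)).exists
    exact ⟨r, h2, h1⟩
  refine ⟨((d : ℝ)⁻¹) ^ (2 * r) / 2, by positivity, r, hr, fun L hL => ?_⟩
  set St : Set (Drv d) := {w | ∀ k ∈ Finset.Ico (L - r) (L + r), (w k).1 = 0} with hSt
  set κ : ℝ := ((d : ℝ)⁻¹) ^ (2 * r) with hκ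
  have hκ0 : 0 < κ := by positivity
  have hStm : lawL d p St = ENNReal.ofReal κ := by
    have := law_pin 5 p ∅ (Finset.Ico (L - r) (L + r)) (Finset.disjoint_empty_right _)
      (fun _ => (0 : Fin d)) 0
    have hc : L + r - (L - r) = 2 * r := by omega
    simpa [qk, hc, hSt, hκ] using this
  have hfar : lawL d p (St ∩ {w | ∃ i < L, ∃ j ≥ L, r ≤ j - i ∧ Ywalk 5 w i = Ywalk 5 w j})
      ≤ ENNReal.ofReal (κ / 2) := by
    refine (meet_union (lawL d p) St L r (ENNReal.ofReal κ) (32 * C) C3 (by positivity) hr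
      (h3 r hr) fun i hi j hj hij => ?_).trans ?_
    · have := straight_meet p C hC0 hC r L hr hL i j hi hj
      rwa [if_neg (by omega)] at this
    · rw [← ENNReal.ofReal_mul hκ0.le]
      apply ENNReal.ofReal_le_ofReal
      nlinarith
  have hnear : lawL d p (⋃ i : ℕ, ⋃ j : ℕ, if i < L ∧ L ≤ j ∧ j - i < r then
      St ∩ {w | Ywalk 5 w i = Ywalk 5 w j} else ∅) = 0 := by
    refine measure_iUnion_null fun i => measure_iUnion_null fun j => ?_
    split_ifs with hc
    · have := straight_meet p C hC0 hC r L hr hL i j hc.1 hc.2.1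
      rw [if_pos hc.2.2] at this
      exact le_antisymm this zero_le
    · simp
  have hsub : St ⊆ {w | LocCut L w} ∪
      ((St ∩ {w | ∃ i < L, ∃ j ≥ L, r ≤ j - i ∧ Ywalk 5 w i = Ywalk 5 w j}) ∪
      ⋃ i : ℕ, ⋃ j : ℕ, if i < L ∧ L ≤ j ∧ j - i < r then
      St ∩ {w | Ywalk 5 w i = Ywalk 5 w j} else ∅) := by
    intro w hw
    by_cases hl : LocCut L w
    · exact Or.inl hl
    · unfold LocCut at hl
      push Not at hl
      obtain ⟨i, hi, j, hj, -, hij⟩ := hl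
      rcases Nat.lt_or_ge (j - i) r with hjr | hjr
      · refine Or.inr (Or.inr (mem_iUnion.2 ⟨i, mem_iUnion.2 ⟨j, ?_⟩⟩))
        rw [if_pos ⟨hi, hj, hjr⟩]
        exact ⟨hw, hij⟩
      · exact Or.inr (Or.inl ⟨hw, i, hi, j, hj, hjr, hij⟩)
  have h1 : ENNReal.ofReal κ ≤ lawL d p {w | LocCut L w} + ENNReal.ofReal (κ / 2) := by
    rw [← hStm]
    refine (measure_mono hsub).trans ((measure_union_le _ _).trans ?_)
    gcongr
    refine (measure_union_le _ _).trans ?_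
    rw [hnear, add_zero]
    exact hfar
  have h2 : ENNReal.ofReal κ = ENNReal.ofReal (κ / 2) + ENNReal.ofReal (κ / 2) := by
    rw [← ENNReal.ofReal_add (by positivity) (by positivity)]; congr 1; ring
  rw [h2] at h1
  exact (ENNReal.add_le_add_iff_right ENNReal.ofReal_ne_top).1 h1

/-- Far intersections across a given time have probability `O(L^{-1/4})`, uniformly in that time. -/
lemma farMeet_le {d : ℕ} [NeZero d] (hd : 2 * 5 ≤ d) (p : unitInterval) :
    ∃ C : ℝ, 0 < C ∧ ∀ L t : ℕ, 0 < L →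
    lawL d p {w | FarMeet L t w} ≤ ENNReal.ofReal (C * (L : ℝ) ^ (-(1 / 4 : ℝ))) := by
  obtain ⟨C, hC0, hC⟩ := exists_heat hd
  obtain ⟨C3, hC3, h3⟩ := tsum_gdec
  refine ⟨C * C3, by positivity, fun L t hL => ?_⟩
  have := meet_union (lawL d p) univ t L 1 C C3 hC0.le hL (h3 L hL) fun i hi j hj _ => by
    rw [univ_inter, one_mul]
    exact meet_le p C hC i j (by omega)
  rwa [univ_inter, one_mul] at this

/-- Local cuts over disjoint time windows are independent. -/
lemma noLoc_pow {d : ℕ} [NeZero d] (p : unitInterval) (L n J : ℕ) :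
    lawL d p {w | ∀ a < J, ¬ LocCut L (shift (n + 2 * L * a) w)}
      = (lawL d p {w | ¬ LocCut L w}) ^ J := by
  induction J with
  | zero => simp
  | succ J ih =>
    have hf : DependsOn (fun w : Drv d => ∀ a < J, ¬ LocCut L (shift (n + 2 * L * a) w))
        (Finset.range (n + 2 * L * J) : Set ℕ) := by
      intro w w' hww
      refine forall_congr fun a => propext (imp_congr_right fun ha => not_congr
        (locCut_congr fun k hk => hww _ ?_))
      have : 2 * L * (a + 1) ≤ 2 * L * J := Nat.mul_le_mul_left _ ha
      rw [mul_add, mul_one] at this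
      simp only [Finset.coe_range, mem_Iio]
      omega
    have hg : DependsOn (fun w : Drv d => ¬ LocCut L (shift (n + 2 * L * J) w))
        (Finset.Ico (n + 2 * L * J) (n + 2 * L * J + 2 * L) : Set ℕ) := by
      intro w w' hww
      refine propext (not_congr (locCut_congr fun k hk => hww _ ?_))
      simp only [Finset.coe_Ico, mem_Ico]
      omega
    have hdisj : Disjoint (Finset.range (n + 2 * L * J))
        (Finset.Ico (n + 2 * L * J) (n + 2 * L * J + 2 * L)) := by
      rw [Finset.disjoint_left]
      intro k hk hk'
      simp at hk hk'
      omega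
    have hind := (dep_indep p hdisj hf hg).measure_inter_preimage_eq_mul {True} {True}
      (measurableSet_singleton _) (measurableSet_singleton _)
    have e1 : (fun w : Drv d => ∀ a < J, ¬ LocCut L (shift (n + 2 * L * a) w)) ⁻¹' {True}
        = {w | ∀ a < J, ¬ LocCut L (shift (n + 2 * L * a) w)} := by
      ext w; simp
    have e2 : (fun w : Drv d => ¬ LocCut L (shift (n + 2 * L * J) w)) ⁻¹' {True}
        = shift (n + 2 * L * J) ⁻¹' {w | ¬ LocCut L w} := by
      ext w; simp
    rw [e1, e2, ih] at hind
    have hmeas : MeasurableSet {w : Drv d | ¬ LocCut L w} := by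
      have hdep : DependsOn (fun w : Drv d => ¬ LocCut L w)
          (Finset.range (2 * L) : Set ℕ) := by
        intro w w' hww
        refine propext (not_congr (locCut_congr fun k hk => hww _ ?_))
        simpa using hk
      have := dep_measurable hdep (measurableSet_singleton True)
      have e3 : (fun w : Drv d => ¬ LocCut L w) ⁻¹' {True} = {w | ¬ LocCut L w} := by
        ext w; simp
      rwa [e3] at this
    rw [(shift_mp d p _).measure_preimage hmeas.nullMeasurableSet] at hind
    rw [pow_succ, ← hind]
    congr 1
    ext w
    simp only [mem_ofPred_eq, mem_inter_iff, mem_preimage]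
    constructor
    · intro hw
      exact ⟨fun a ha => hw a (by omega), hw J (by omega)⟩
    · rintro ⟨h1, h2⟩ a ha
      rcases Nat.lt_succ_iff_lt_or_eq.1 ha with h | rfl
      · exact h1 a h
      · exact h2

lemma one_sub_pow_le (c : ℝ) (hc : 0 < c) (hc1 : c ≤ 1) (m : ℕ) (hm : 0 < m) :
    (1 - c) ^ m ≤ 1 / c / m := by
  have hm' : (0 : ℝ) < m := by exact_mod_cast hm
  -- multiply by `(1 + c)^m ≥ 1 + m c`, noting that `(1 - c)(1 + c) ≤ 1`
  have h1 := one_add_mul_le_pow (show (-2 : ℝ) ≤ c by linarith) m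
  have h2 : (1 - c) ^ m * (1 + c) ^ m ≤ 1 := by
    rw [← mul_pow]
    apply pow_le_one₀
    · nlinarith
    · nlinarith
  have h3 : 0 ≤ (1 - c) ^ m := pow_nonneg (by linarith) _
  rw [div_div, le_div_iff₀ (by positivity)]
  nlinarith

/-- Cut times are frequent: the probability that a window of length `2 m^9` contains none is
`O(1/m)`. -/
lemma noCut_le {d : ℕ} [NeZero d] (hd : 2 * 5 ≤ d) (p : unitInterval) :
    ∃ K : ℝ, 0 < K ∧ ∀ m n : ℕ, 0 < m →
    lawL d p {w | ∀ T, n ≤ T → T ≤ n + 2 * m ^ 9 → ¬ IsCut 5 w T} ≤ ENNReal.ofReal (K / m) := by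
  obtain ⟨c, hc, L0, hL0, hloc⟩ := locCut_pos hd p
  obtain ⟨C, hC, hfar⟩ := farMeet_le hd p
  have hc1 : c ≤ 1 := by
    have := (hloc L0 le_rfl).trans prob_le_one
    simpa using this
  refine ⟨1 / c + C + L0, by positivity, fun m n hm => ?_⟩
  have hm' : (0 : ℝ) < m := by exact_mod_cast hm
  -- for `m < L0` the bound exceeds one
  rcases Nat.lt_or_ge m L0 with hmL | hmL
  · refine prob_le_one.trans ?_
    rw [← ENNReal.ofReal_one]
    apply ENNReal.ofReal_le_ofReal
    rw [le_div_iff₀ hm', one_mul]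
    have : (m : ℝ) ≤ L0 := by exact_mod_cast hmL.le
    have : 0 < 1 / c := by positivity
    linarith
  -- with windows of length `2 m^8`, each of the `m` far intersections has probability `O(m^{-2})`
  set L := m ^ 8 with hL
  have hLm : m ≤ L := Nat.le_self_pow (by norm_num) m
  have hLr : (L : ℝ) ^ (-(1 / 4 : ℝ)) = ((m : ℝ) ^ 2)⁻¹ := by
    rw [hL]
    push_cast
    rw [← Real.rpow_natCast, ← Real.rpow_mul hm'.le, ← Real.rpow_natCast, ← Real.rpow_neg hm'.le]
    norm_num
  have hsub : {w : Drv d | ∀ T, n ≤ T → T ≤ n + 2 * m ^ 9 → ¬ IsCut 5 w T} ⊆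
      {w | ∀ a < m, ¬ LocCut L (shift (n + 2 * L * a) w)} ∪
      ⋃ a ∈ Finset.range m, {w | FarMeet L (n + 2 * L * a + L) w} := by
    intro w hw
    by_cases h1 : ∀ a < m, ¬ LocCut L (shift (n + 2 * L * a) w)
    · exact Or.inl h1
    · push Not at h1
      obtain ⟨a, ha, h1⟩ := h1
      refine Or.inr (mem_biUnion (Finset.mem_coe.2 (Finset.mem_range.2 ha)) ?_)
      by_contra h2
      refine hw (n + 2 * L * a + L) (by omega) ?_ (isCut_of_loc h1 h2)
      have h3 : 2 * L * (a + 1) ≤ 2 * L * m := Nat.mul_le_mul_left _ ha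
      have h4 : 2 * L * m = 2 * m ^ 9 := by rw [hL]; ring
      rw [mul_add, mul_one] at h3
      omega
  have hcompl : lawL d p {w | ¬ LocCut L w} ≤ ENNReal.ofReal (1 - c) := by
    have hmeas : MeasurableSet {w : Drv d | LocCut L w} := by
      have hdep : DependsOn (fun w : Drv d => LocCut L w)
          (Finset.range (2 * L) : Set ℕ) := by
        intro w w' hww
        refine propext (locCut_congr fun k hk => hww _ ?_)
        simpa using hk
      have := dep_measurable hdep (measurableSet_singleton True)
      have e3 : (fun w : Drv d => LocCut L w) ⁻¹' {True} = {w | LocCut L w} := by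
        ext w; simp
      rwa [e3] at this
    have e4 : {w : Drv d | ¬ LocCut L w} = {w | LocCut L w}ᶜ := rfl
    rw [e4, prob_compl_eq_one_sub hmeas, ENNReal.ofReal_sub _ hc.le, ENNReal.ofReal_one]
    exact tsub_le_tsub_left (hloc L (hmL.trans hLm)) _
  refine (measure_mono hsub).trans ((measure_union_le _ _).trans ?_)
  calc _ ≤ ENNReal.ofReal (1 / c / m) + ENNReal.ofReal (C / m) := by
        gcongr
        · rw [noLoc_pow]
          calc _ ≤ ENNReal.ofReal (1 - c) ^ m := by gcongr
            _ = ENNReal.ofReal ((1 - c) ^ m) := by rw [ENNReal.ofReal_pow (by linarith)]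
            _ ≤ _ := ENNReal.ofReal_le_ofReal (one_sub_pow_le c hc hc1 m hm)
        · refine (measure_biUnion_finset_le _ _).trans ?_
          refine (Finset.sum_le_sum fun a _ => hfar L _ (by omega)).trans ?_
          rw [Finset.sum_const, Finset.card_range, hLr, nsmul_eq_mul, ← ENNReal.ofReal_natCast,
            ← ENNReal.ofReal_mul hm'.le]
          apply ENNReal.ofReal_le_ofReal
          apply le_of_eq
          field_simp
    _ = ENNReal.ofReal (1 / c / m + C / m) := by
        rw [ENNReal.ofReal_add (by positivity) (by positivity)]
    _ ≤ _ := by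
        apply ENNReal.ofReal_le_ofReal
        rw [← add_div]
        have : (0 : ℝ) ≤ L0 := Nat.cast_nonneg _
        exact div_le_div_of_nonneg_right (by linarith) hm'.le

/-! ### Approximate additivity and the mean velocity -/

section LLN
variable {d : ℕ}

/-- A coordinate of the lazily revealed walk, as a real number. -/
noncomputable def Xw (h : 2 * 5 ≤ d) (i : Fin d) (n : ℕ) (w : Drv d) : ℝ := (lwalk h w n i : ℤ)

variable (h : 2 * 5 ≤ d) (i : Fin d)

lemma Xw_dep (n : ℕ) : DependsOn (Xw h i n) (Finset.range n : Set ℕ) := by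
  intro w w' hww
  have := lwalk_dep h n hww
  simp only [Xw]
  simp only at this
  rw [this]

lemma Xw_lip (w : Drv d) (n m : ℕ) : |Xw h i (n + m) w - Xw h i n w| ≤ m := by
  have := lwalk_lip h w n m i
  unfold Xw
  exact_mod_cast this

lemma Xw_abs (w : Drv d) (n : ℕ) : |Xw h i n w| ≤ n := by
  have := Xw_lip h i w 0 n
  simpa [Xw, lwalk_zero] using this

/-- If there is a cut time in `[n, n + H]`, then the increments after time `n` almost agree with the
walk driven by the shifted sequence. -/
lemma Xw_near (w : Drv d) (n l H : ℕ) (hcut : ∃ T, n ≤ T ∧ T ≤ n + H ∧ IsCut 5 w T) :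
    |Xw h i (n + l) w - Xw h i n w - Xw h i l (shift n w)| ≤ 2 * H := by
  obtain ⟨T, hT1, hT2, hT⟩ := hcut
  obtain ⟨s, rfl⟩ := Nat.exists_eq_add_of_le hT1
  have hsH : (s : ℝ) ≤ H := by exact_mod_cast (show s ≤ H by omega)
  -- if the cut time is not reached, all the displacements are at most `l < s ≤ H`
  rcases Nat.lt_or_ge l s with hls | hls
  · have h1 := Xw_lip h i w n l
    have h2 := Xw_abs h i (shift n w) l
    have h3 : (l : ℝ) ≤ s := by exact_mod_cast hls.le
    rw [abs_le] at *
    constructor <;> linarith [h1.1, h1.2, h2.1, h2.2]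
  · obtain ⟨r, rfl⟩ := Nat.exists_eq_add_of_le hls
    have h1 := lwalk_cut h hT r
    have h2 := lwalk_cut h hT.shift r
    have h3 : shift s (shift n w) = shift (n + s) w := by
      funext k; simp [shift, add_assoc]
    have e1 : Xw h i (n + (s + r)) w = Xw h i (n + s) w + Xw h i r (shift (n + s) w) := by
      unfold Xw
      rw [← add_assoc, h1]
      simp
    have e2 : Xw h i (s + r) (shift n w) = Xw h i s (shift n w) + Xw h i r (shift (n + s) w) := by
      unfold Xw
      rw [h2, h3]
      simp
    have h4 := Xw_lip h i w n s
    have h5 := Xw_abs h i (shift n w) s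
    rw [e1, e2]
    rw [abs_le] at *
    constructor <;> linarith [h4.1, h4.2, h5.1, h5.2]

variable [NeZero d] (p : unitInterval)

lemma Xw_meas (n : ℕ) : Measurable (Xw h i n) := dep_measurable (Xw_dep h i n)

lemma Xw_shift_meas (n l : ℕ) : Measurable (fun w => Xw h i l (shift n w)) :=
  (Xw_meas h i l).comp (shift_mp d 0 n).measurable

lemma Xw_integrable (n : ℕ) : Integrable (Xw h i n) (lawL d p) :=
  Integrable.of_bound (Xw_meas h i n).aestronglyMeasurable (n : ℝ)
    (Eventually.of_forall fun w => Xw_abs h i w n)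

lemma Xw_shift_integrable (n l : ℕ) : Integrable (fun w => Xw h i l (shift n w)) (lawL d p) :=
  Integrable.of_bound (Xw_shift_meas h i n l).aestronglyMeasurable (l : ℝ)
    (Eventually.of_forall fun _ => Xw_abs h i _ l)

lemma Xw_shift_integral (n l : ℕ) :
    ∫ w, Xw h i l (shift n w) ∂(lawL d p) = ∫ w, Xw h i l w ∂(lawL d p) := by
  have := integral_map (μ := lawL d p) (shift_mp d p n).measurable.aemeasurable
    (f := Xw h i l) (Xw_meas h i l).aestronglyMeasurable
  rw [(shift_mp d p n).map_eq] at this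
  exact this.symm

/-- Approximate additivity in `L¹`. -/
lemma Xw_err : ∃ K : ℝ, 0 < K ∧ ∀ m n l : ℕ, 0 < m →
    ∫ w, |Xw h i (n + l) w - Xw h i n w - Xw h i l (shift n w)| ∂(lawL d p)
      ≤ 4 * (m : ℝ) ^ 9 + K * l / m := by
  obtain ⟨K, hK, hcut⟩ := noCut_le h p
  refine ⟨2 * K, by positivity, fun m n l hm => ?_⟩
  set N := toMeasurable (lawL d p) {w | ∀ T, n ≤ T → T ≤ n + 2 * m ^ 9 → ¬ IsCut 5 w T} with hN
  have hm' : (0 : ℝ) < m := by exact_mod_cast hm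
  have hNm : MeasurableSet N := measurableSet_toMeasurable _ _
  have hNp : (lawL d p).real N ≤ K / m := by
    rw [measureReal_def, hN, measure_toMeasurable]
    exact ENNReal.toReal_le_of_le_ofReal (by positivity) (hcut m n hm)
  -- without a cut time the Lipschitz property bounds the error by `2 l`
  have hbd : ∀ w, |Xw h i (n + l) w - Xw h i n w - Xw h i l (shift n w)|
      ≤ 4 * (m : ℝ) ^ 9 + N.indicator (fun _ => 2 * (l : ℝ)) w := by
    intro w
    by_cases hw : ∃ T, n ≤ T ∧ T ≤ n + 2 * m ^ 9 ∧ IsCut 5 w T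
    · have h1 := Xw_near h i w n l _ hw
      have h2 : 0 ≤ N.indicator (fun _ => 2 * (l : ℝ)) w :=
        indicator_nonneg (fun _ _ => by positivity) _
      push_cast at h1
      linarith
    · have hwN : w ∈ N := subset_toMeasurable _ _ (fun T h1 h2 h3 => hw ⟨T, h1, h2, h3⟩)
      rw [indicator_of_mem hwN]
      have h1 := Xw_lip h i w n l
      have h2 := Xw_abs h i (shift n w) l
      have h3 : 0 ≤ 4 * (m : ℝ) ^ 9 := by positivity
      rw [abs_le] at *
      constructor <;> linarith [h1.1, h1.2, h2.1, h2.2]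
  have hi2 : Integrable (N.indicator (fun _ : Drv d => 2 * (l : ℝ))) (lawL d p) :=
    (integrable_const _).indicator hNm
  refine (integral_mono ?_ ((integrable_const _).add hi2) hbd).trans ?_
  · exact (((Xw_integrable h i p _).sub (Xw_integrable h i p _)).sub
      (Xw_shift_integrable h i p n l)).abs
  · simp only [Pi.add_apply]
    rw [integral_add (integrable_const _) hi2, integral_indicator_const _ hNm]
    simp only [integral_const, probReal_univ, smul_eq_mul]
    have : (lawL d p).real N * (2 * (l : ℝ)) ≤ K / m * (2 * l) := by gcongr
    calc _ ≤ 4 * (m : ℝ) ^ 9 + K / m * (2 * l) := by linarith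
      _ = _ := by ring

/-- The walk at time `q b` compared with a sum of independent copies of the walk at time `b`. -/
lemma Xw_blocks : ∃ K : ℝ, 0 < K ∧ ∀ m b q : ℕ, 0 < m →
    ∫ w, |Xw h i (q * b) w - ∑ j ∈ Finset.range q, Xw h i b (shift (j * b) w)| ∂(lawL d p)
      ≤ q * (4 * (m : ℝ) ^ 9 + K * b / m) := by
  obtain ⟨K, hK, herr⟩ := Xw_err h i p
  refine ⟨K, hK, fun m b q hm => ?_⟩
  induction q with
  | zero => simp [Xw, lwalk_zero]
  | succ q ih =>
    have hXint : ∀ q : ℕ, Integrable (fun w => Xw h i (q * b) w -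
        ∑ j ∈ Finset.range q, Xw h i b (shift (j * b) w)) (lawL d p) := fun q =>
      (Xw_integrable h i p _).sub
        (integrable_finsetSum _ fun j _ => Xw_shift_integrable h i p (j * b) b)
    have herr' := herr m (q * b) b hm
    have hint2 : Integrable (fun w => Xw h i (q * b + b) w - Xw h i (q * b) w -
        Xw h i b (shift (q * b) w)) (lawL d p) :=
      ((Xw_integrable h i p _).sub (Xw_integrable h i p _)).sub (Xw_shift_integrable h i p _ _)
    calc _ ≤ ∫ w, (|Xw h i (q * b) w - ∑ j ∈ Finset.range q, Xw h i b (shift (j * b) w)| +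
          |Xw h i (q * b + b) w - Xw h i (q * b) w - Xw h i b (shift (q * b) w)|) ∂(lawL d p) := by
          refine integral_mono (hXint _).abs ((hXint q).abs.add hint2.abs) fun w => ?_
          simp only
          rw [Finset.sum_range_succ, add_mul, one_mul]
          refine le_trans (le_of_eq ?_) (abs_add_le _ _)
          congr 1
          ring
      _ ≤ _ := by
          rw [integral_add (hXint q).abs hint2.abs]
          push_cast
          linarith

/-- The mean of a coordinate. -/
noncomputable def Xm (n : ℕ) : ℝ := ∫ w, Xw h i n w ∂(lawL d p)

lemma Xm_abs (n : ℕ) : |Xm h i p n| ≤ n := by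
  unfold Xm
  have := norm_integral_le_of_norm_le_const (μ := lawL d p) (f := Xw h i n) (C := n)
    (Eventually.of_forall fun w => Xw_abs h i w n)
  simpa using this

/-- The mean velocity exists. By approximate additivity the mean slopes at times `n` and `b` differ by at
most `4 m^9 / b + K / m + 2 b / n`, so the slopes form a Cauchy sequence: choose `m` large, then `b`
large depending on `m`, and let `n` tend to infinity. -/
lemma Xm_tendsto : ∃ v : ℝ, Tendsto (fun n : ℕ => Xm h i p n / n) atTop (𝓝 v) := by
  obtain ⟨K, hK, hbl⟩ := Xw_blocks h i p
  have key : ∀ m b n : ℕ, 0 < m → 0 < b → 0 < n →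
      |Xm h i p n / n - Xm h i p b / b| ≤ 4 * (m : ℝ) ^ 9 / b + K / m + 2 * b / n := by
    intro m b n hm hb hn
    have hm' : (0 : ℝ) < m := by exact_mod_cast hm
    have hb' : (0 : ℝ) < b := by exact_mod_cast hb
    have hn' : (0 : ℝ) < n := by exact_mod_cast hn
    set q := n / b with hq
    set r := n % b with hr
    have hnq : n = q * b + r := by rw [hq, hr, mul_comm]; exact (Nat.div_add_mod n b).symm
    have hrb : (r : ℝ) ≤ b := by exact_mod_cast (Nat.mod_lt n hb).le
    have hnq' : (n : ℝ) = q * b + r := by exact_mod_cast hnq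
    have hr0 : (0 : ℝ) ≤ r := Nat.cast_nonneg _
    have h1 : |Xm h i p (q * b) - q * Xm h i p b| ≤ q * (4 * (m : ℝ) ^ 9 + K * b / m) := by
      refine le_trans ?_ (hbl m b q hm)
      have e1 : Xm h i p (q * b) - q * Xm h i p b = ∫ w, (Xw h i (q * b) w -
          ∑ j ∈ Finset.range q, Xw h i b (shift (j * b) w)) ∂(lawL d p) := by
        rw [integral_sub (Xw_integrable h i p _)
          (integrable_finsetSum _ fun j _ => Xw_shift_integrable h i p (j * b) b),
          integral_finsetSum _ fun j _ => Xw_shift_integrable h i p (j * b) b]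
        simp only [Xw_shift_integral, Finset.sum_const, Finset.card_range, nsmul_eq_mul]
        rfl
      rw [e1]
      exact abs_integral_le_integral_abs
    have h2 : |Xm h i p n - Xm h i p (q * b)| ≤ b := by
      have e1 : Xm h i p n - Xm h i p (q * b) =
          ∫ w, (Xw h i (q * b + r) w - Xw h i (q * b) w) ∂(lawL d p) := by
        rw [integral_sub (Xw_integrable h i p _) (Xw_integrable h i p _), ← hnq]
        rfl
      rw [e1]
      have := norm_integral_le_of_norm_le_const (μ := lawL d p)
        (f := fun w => Xw h i (q * b + r) w - Xw h i (q * b) w) (C := r)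
        (Eventually.of_forall fun w => Xw_lip h i w _ r)
      simp only [Real.norm_eq_abs, probReal_univ, mul_one] at this
      linarith
    have h3 : |(r : ℝ) * (Xm h i p b / b)| ≤ b := by
      rw [abs_mul, abs_div, abs_of_nonneg hr0, abs_of_pos hb']
      have := Xm_abs h i p b
      have h4 : |Xm h i p b| / b ≤ 1 := by rw [div_le_one hb']; exact this
      calc (r : ℝ) * (|Xm h i p b| / b) ≤ b * 1 := by gcongr
        _ = b := mul_one _
    have h5 : Xm h i p n / n - Xm h i p b / b =
        ((Xm h i p n - Xm h i p (q * b)) + (Xm h i p (q * b) - q * Xm h i p b)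
          - r * (Xm h i p b / b)) / n := by
      rw [eq_div_iff hn'.ne', sub_mul, div_mul_cancel₀ _ hn'.ne']
      rw [hnq']
      field_simp
      ring
    have h6 : (q : ℝ) * b ≤ n := by linarith
    have h7 : (q : ℝ) * (4 * (m : ℝ) ^ 9 + K * b / m) ≤ n * (4 * (m : ℝ) ^ 9 / b + K / m) := by
      have : (q : ℝ) * (4 * (m : ℝ) ^ 9 + K * b / m) =
          (q * b) * (4 * (m : ℝ) ^ 9 / b + K / m) := by field_simp
      rw [this]
      gcongr
    rw [h5, abs_div, abs_of_pos hn', div_le_iff₀ hn']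
    have h8 : (4 * (m : ℝ) ^ 9 / b + K / m + 2 * b / n) * n =
        n * (4 * (m : ℝ) ^ 9 / b + K / m) + 2 * b := by field_simp
    rw [h8]
    rw [abs_le] at *
    constructor <;> linarith [h1.1, h1.2, h2.1, h2.2, h3.1, h3.2]
  refine cauchySeq_tendsto_of_complete (Metric.cauchySeq_iff.2 fun ε hε => ?_)
  obtain ⟨m, hm1, hm2⟩ : ∃ m : ℕ, 0 < m ∧ K / m < ε / 8 := by
    have : Tendsto (fun m : ℕ => K / m) atTop (𝓝 0) := tendsto_const_div_atTop_nhds_zero_nat K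
    obtain ⟨m, h1, h2⟩ := ((this.eventually_lt_const (show (0 : ℝ) < ε / 8 by positivity)).and
      (eventually_gt_atTop 0)).exists
    exact ⟨m, h2, h1⟩
  obtain ⟨b, hb1, hb2⟩ : ∃ b : ℕ, 0 < b ∧ 4 * (m : ℝ) ^ 9 / b < ε / 8 := by
    have : Tendsto (fun b : ℕ => 4 * (m : ℝ) ^ 9 / b) atTop (𝓝 0) :=
      tendsto_const_div_atTop_nhds_zero_nat _
    obtain ⟨m, h1, h2⟩ := ((this.eventually_lt_const (show (0 : ℝ) < ε / 8 by positivity)).and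
      (eventually_gt_atTop 0)).exists
    exact ⟨m, h2, h1⟩
  have : Tendsto (fun n : ℕ => 2 * (b : ℝ) / n) atTop (𝓝 0) :=
    tendsto_const_div_atTop_nhds_zero_nat _
  obtain ⟨N, hN⟩ := eventually_atTop.1 ((this.eventually_lt_const
    (show (0 : ℝ) < ε / 8 by positivity)).and (eventually_gt_atTop 0))
  refine ⟨N, fun n hn n' hn' => ?_⟩
  have h1 := key m b n hm1 hb1 (hN n hn).2
  have h2 := key m b n' hm1 hb1 (hN n' hn').2
  have h3 := (hN n hn).1
  have h4 := (hN n' hn').1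
  rw [Real.dist_eq]
  have h5 := abs_sub_le (Xm h i p n / n) (Xm h i p b / b) (Xm h i p n' / n')
  rw [abs_sub_comm (Xm h i p b / b)] at h5
  linarith

/-- `L¹` law of large numbers for the independent blocks, from the variance bound. -/
lemma Xw_var (b q : ℕ) (s : ℝ) (hs : 0 < s) :
    ∫ w, |∑ j ∈ Finset.range q, Xw h i b (shift (j * b) w) - q * Xm h i p b| ∂(lawL d p)
      ≤ q * (b : ℝ) ^ 2 / s + s := by
  set S : Drv d → ℝ := fun w => ∑ j ∈ Finset.range q, Xw h i b (shift (j * b) w) with hS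
  have hmem : ∀ j, MemLp (fun w => Xw h i b (shift (j * b) w)) 2 (lawL d p) := fun j =>
    MemLp.of_bound (Xw_shift_meas h i _ _).aestronglyMeasurable (b : ℝ)
      (Eventually.of_forall fun w => Xw_abs h i _ b)
  have hSmem : MemLp S 2 (lawL d p) := memLp_finsetSum _ fun j _ => hmem j
  have hmean : ∫ w, S w ∂(lawL d p) = q * Xm h i p b := by
    rw [hS, integral_finsetSum _ fun j _ => Xw_shift_integrable h i p (j * b) b]
    simp only [Xw_shift_integral, Finset.sum_const, Finset.card_range, nsmul_eq_mul]
    rfl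
  have hdep : ∀ j, DependsOn (fun w => Xw h i b (shift (j * b) w))
      (Finset.Ico (j * b) (j * b + b) : Set ℕ) := by
    intro j w w' hww
    refine Xw_dep h i b fun k hk => hww _ ?_
    simp only [Finset.coe_range, mem_Iio] at hk
    simp only [Finset.coe_Ico, mem_Ico]
    omega
  have hvar : ProbabilityTheory.variance S (lawL d p) ≤ q * (b : ℝ) ^ 2 := by
    have e1 : S = ∑ j ∈ Finset.range q, fun w => Xw h i b (shift (j * b) w) := by
      funext w; simp [hS]
    rw [e1, ProbabilityTheory.IndepFun.variance_sum (fun j _ => hmem j)]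
    · calc _ ≤ ∑ j ∈ Finset.range q, (b : ℝ) ^ 2 := by
            refine Finset.sum_le_sum fun j _ => ?_
            refine (ProbabilityTheory.variance_le_expectation_sq
              (Xw_shift_meas h i _ _).aestronglyMeasurable).trans ?_
            have := norm_integral_le_of_norm_le_const (μ := lawL d p)
              (f := (fun w => Xw h i b (shift (j * b) w)) ^ 2) (C := (b : ℝ) ^ 2)
              (Eventually.of_forall fun w => by
                have := Xw_abs h i (shift (j * b) w) b
                simp only [Pi.pow_apply, norm_pow, Real.norm_eq_abs]
                gcongr)
            rw [probReal_univ, mul_one] at this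
            exact (le_abs_self _).trans this
        _ = _ := by simp
    · intro j _ j' _ hjj
      refine dep_indep p ?_ (hdep j) (hdep j')
      rw [Finset.disjoint_left]
      intro k hk hk'
      rw [Finset.mem_Ico] at hk hk'
      rcases lt_or_gt_of_ne hjj with h1 | h1
      · have : (j + 1) * b ≤ j' * b := Nat.mul_le_mul_right _ h1
        rw [add_mul, one_mul] at this
        omega
      · have : (j' + 1) * b ≤ j * b := Nat.mul_le_mul_right _ h1
        rw [add_mul, one_mul] at this
        omega
  have hsq : Integrable (fun w => (S w - q * Xm h i p b) ^ 2) (lawL d p) :=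
    (hSmem.sub (memLp_const _)).integrable_sq
  rw [ProbabilityTheory.variance_eq_integral hSmem.aestronglyMeasurable.aemeasurable, hmean] at hvar
  have hSint : Integrable (fun w => S w - q * Xm h i p b) (lawL d p) :=
    (hSmem.integrable (by norm_num)).sub (integrable_const _)
  calc _ ≤ ∫ w, ((S w - q * Xm h i p b) ^ 2 / s + s) ∂(lawL d p) := by
        refine integral_mono hSint.abs ((hsq.div_const _).add (integrable_const _)) fun w => ?_
        simp only
        -- the elementary bound `|x| ≤ x² / s + s`
        rw [← sub_le_iff_le_add, le_div_iff₀ hs, ← sq_abs (S w - q * Xm h i p b)]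
        nlinarith [sq_nonneg (|S w - q * Xm h i p b| - s)]
    _ ≤ _ := by
        rw [integral_add (hsq.div_const _) (integrable_const _), integral_div]
        simp only [integral_const, probReal_univ, one_smul]
        gcongr

end LLN

/-! ### The law of large numbers and transience -/

/-- Summable first moments force almost sure convergence to zero. -/
lemma ae_tendsto_zero_of_summable {α : Type*} [MeasurableSpace α] (m : Measure α) (f : ℕ → α → ℝ)
    (hf : ∀ n, Integrable (f n) m) (b : ℕ → ℝ) (hb : Summable b) (hfb : ∀ n, ∫ w, |f n w| ∂m ≤ b n) :
    ∀ᵐ w ∂m, Tendsto (fun n => f n w) atTop (𝓝 0) := by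
  have hb0 : ∀ n, 0 ≤ b n := fun n => (integral_nonneg fun _ => abs_nonneg _).trans (hfb n)
  have h1 : ∀ n, ∫⁻ w, ‖f n w‖ₑ ∂m ≤ ENNReal.ofReal (b n) := fun n => by
    rw [← ofReal_integral_norm_eq_lintegral_enorm (hf n)]
    exact ENNReal.ofReal_le_ofReal (hfb n)
  have h2 : ∫⁻ w, ∑' n, ‖f n w‖ₑ ∂m ≠ ⊤ := by
    rw [lintegral_tsum fun n => (hf n).aestronglyMeasurable.enorm]
    refine ne_top_of_le_ne_top ?_ (ENNReal.tsum_le_tsum h1)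
    rw [← ENNReal.ofReal_tsum_of_nonneg hb0 hb]
    exact ENNReal.ofReal_ne_top
  filter_upwards [ae_lt_top' (AEMeasurable.tsum fun n =>
    (hf n).aestronglyMeasurable.enorm) h2] with w hw
  have h3 := ENNReal.tendsto_atTop_zero_of_tsum_ne_top hw.ne
  rw [tendsto_zero_iff_norm_tendsto_zero]
  have h4 := (ENNReal.tendsto_toReal ENNReal.zero_ne_top).comp h3
  simpa [Function.comp_def] using h4

section LLN
variable {d : ℕ} (h : 2 * 5 ≤ d) (i : Fin d) [NeZero d] (p : unitInterval)

/-- Along times `N^40` the deviation from the mean of a block has first moment `O(N^{-2})`: use `N^20`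
blocks of length `N^20`, with `m = N^2` in `Xw_blocks` and `s = N^30` in `Xw_var`. -/
lemma Xw_dev : ∃ K : ℝ, 0 < K ∧ ∀ N : ℕ, 0 < N →
    ∫ w, |(Xw h i (N ^ 20 * N ^ 20) w - (N ^ 20 : ℕ) * Xm h i p (N ^ 20)) / (N : ℝ) ^ 40| ∂(lawL d p)
      ≤ K * (1 / (N : ℝ) ^ 2) := by
  obtain ⟨K, hK, hbl⟩ := Xw_blocks h i p
  refine ⟨K + 6, by positivity, fun N hN => ?_⟩
  have hN' : (1 : ℝ) ≤ N := by exact_mod_cast hN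
  have hN0 : (0 : ℝ) < N := by linarith
  have h1 := hbl (N ^ 2) (N ^ 20) (N ^ 20) (by positivity)
  have h2 := Xw_var h i p (N ^ 20) (N ^ 20) ((N : ℝ) ^ 30) (by positivity)
  have hsum : Integrable (fun w => ∑ j ∈ Finset.range (N ^ 20),
      Xw h i (N ^ 20) (shift (j * N ^ 20) w)) (lawL d p) :=
    integrable_finsetSum _ fun j _ => Xw_shift_integrable h i p _ _
  have hint1 : Integrable (fun w => Xw h i (N ^ 20 * N ^ 20) w - ∑ j ∈ Finset.range (N ^ 20),
      Xw h i (N ^ 20) (shift (j * N ^ 20) w)) (lawL d p) := (Xw_integrable h i p _).sub hsum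
  have hint2 : Integrable (fun w => ∑ j ∈ Finset.range (N ^ 20),
      Xw h i (N ^ 20) (shift (j * N ^ 20) w) - (N ^ 20 : ℕ) * Xm h i p (N ^ 20)) (lawL d p) :=
    hsum.sub (integrable_const _)
  have h3 : ∫ w, |Xw h i (N ^ 20 * N ^ 20) w - (N ^ 20 : ℕ) * Xm h i p (N ^ 20)| ∂(lawL d p) ≤
      (K + 6) * (N : ℝ) ^ 38 := by
    calc _ ≤ ∫ w, (|Xw h i (N ^ 20 * N ^ 20) w - ∑ j ∈ Finset.range (N ^ 20),
          Xw h i (N ^ 20) (shift (j * N ^ 20) w)| + |∑ j ∈ Finset.range (N ^ 20),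
          Xw h i (N ^ 20) (shift (j * N ^ 20) w) - (N ^ 20 : ℕ) * Xm h i p (N ^ 20)|) ∂(lawL d p) := by
          refine integral_mono ((Xw_integrable h i p _).sub (integrable_const _)).abs
            (hint1.abs.add hint2.abs) fun w => ?_
          exact abs_sub_le _ _ _
      _ ≤ _ := by
          rw [integral_add hint1.abs hint2.abs]
          refine (add_le_add h1 h2).trans ?_
          push_cast
          have e1 : (N : ℝ) ^ 20 * (4 * ((N : ℝ) ^ 2) ^ 9 + K * (N : ℝ) ^ 20 / (N : ℝ) ^ 2)
              = (4 + K) * (N : ℝ) ^ 38 := by field_simp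
          have e2 : (N : ℝ) ^ 20 * ((N : ℝ) ^ 20) ^ 2 / (N : ℝ) ^ 30 + (N : ℝ) ^ 30
              = 2 * (N : ℝ) ^ 30 := by field_simp; ring
          have e3 : (N : ℝ) ^ 30 ≤ (N : ℝ) ^ 38 := pow_le_pow_right₀ hN' (by norm_num)
          rw [e1, e2]
          linarith
  have hN40 : (0 : ℝ) < (N : ℝ) ^ 40 := by positivity
  simp only [abs_div, abs_of_pos hN40]
  rw [integral_div, div_le_iff₀ hN40]
  refine h3.trans (le_of_eq ?_)
  field_simp

/-- Strong law of large numbers for each coordinate of the lazily revealed walk. -/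
lemma Xw_lln : ∃ v : ℝ, Tendsto (fun n : ℕ => Xm h i p n / n) atTop (𝓝 v) ∧
    ∀ᵐ w ∂(lawL d p), Tendsto (fun n : ℕ => Xw h i n w / n) atTop (𝓝 v) := by
  obtain ⟨v, hv⟩ := Xm_tendsto h i p
  refine ⟨v, hv, ?_⟩
  obtain ⟨K, hK, hdev⟩ := Xw_dev h i p
  have hae := ae_tendsto_zero_of_summable (lawL d p)
    (fun k w => (Xw h i ((k + 1) ^ 20 * (k + 1) ^ 20) w -
      ((k + 1) ^ 20 : ℕ) * Xm h i p ((k + 1) ^ 20)) / ((k + 1 : ℕ) : ℝ) ^ 40)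
    (fun k => ((Xw_integrable h i p _).sub (integrable_const _)).div_const _)
    (fun k => K * (1 / ((k + 1 : ℕ) : ℝ) ^ 2))
    (((summable_nat_add_iff 1).2 (Real.summable_one_div_nat_pow.2 (by norm_num))).mul_left K)
    (fun k => hdev (k + 1) (Nat.succ_pos k))
  filter_upwards [hae] with w hw
  set c : ℕ → ℕ := fun k => (k + 1) ^ 20 * (k + 1) ^ 20 with hc
  have hsucc : Tendsto (fun k : ℕ => k + 1) atTop atTop := tendsto_add_atTop_nat 1
  have h1 : Tendsto (fun k : ℕ => Xm h i p ((k + 1) ^ 20) / ((k + 1) ^ 20 : ℕ)) atTop (𝓝 v) :=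
    hv.comp ((tendsto_pow_atTop (by norm_num)).comp hsucc)
  have h2 : Tendsto (fun k : ℕ => Xw h i (c k) w / (c k : ℕ)) atTop (𝓝 v) := by
    have := hw.add h1
    rw [zero_add] at this
    refine this.congr fun k => ?_
    have hk : ((k + 1 : ℕ) : ℝ) ≠ 0 := by positivity
    simp only [hc]
    push_cast at hk ⊢
    field_simp
    ring
  -- adding the time makes the coordinate monotone, so that convergence along a subsequence whose
  -- successive ratios tend to one is sufficient
  have hmono : Monotone (fun n : ℕ => Xw h i n w + n) := by
    refine monotone_nat_of_le_succ fun n => ?_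
    have := Xw_lip h i w n 1
    rw [abs_le] at this
    push_cast at *
    linarith [this.1]
  have hmain : Tendsto (fun n : ℕ => (Xw h i n w + n) / n) atTop (𝓝 (v + 1)) := by
    refine tendsto_div_of_monotone_of_exists_subseq_tendsto_div _ _ hmono fun a ha => ?_
    refine ⟨c, ?_, ?_, ?_⟩
    · have hr : Tendsto (fun k : ℕ => (((k + 1 : ℕ) : ℝ) + 1) / ((k + 1 : ℕ) : ℝ)) atTop (𝓝 1) := by
        have : Tendsto (fun k : ℕ => 1 + 1 / ((k + 1 : ℕ) : ℝ)) atTop (𝓝 (1 + 0)) :=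
          ((tendsto_const_div_atTop_nhds_zero_nat (1 : ℝ)).comp hsucc).const_add 1
        rw [add_zero] at this
        refine this.congr fun k => ?_
        have hk : ((k + 1 : ℕ) : ℝ) ≠ 0 := by positivity
        field_simp
      have hr' := hr.pow 40
      rw [one_pow] at hr'
      filter_upwards [hr'.eventually_le_const ha] with k hk
      have hk0 : (0 : ℝ) < ((k + 1 : ℕ) : ℝ) ^ 40 := by positivity
      rw [div_pow, div_le_iff₀ hk0] at hk
      simp only [hc]
      push_cast at hk ⊢
      calc _ = ((k : ℝ) + 1 + 1) ^ 40 := by ring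
        _ ≤ _ := hk
        _ = _ := by ring
    · exact (((tendsto_pow_atTop (by norm_num)).atTop_mul_atTop₀
        (tendsto_pow_atTop (by norm_num))).comp hsucc)
    · refine (h2.add_const 1).congr fun k => ?_
      have : ((c k : ℕ) : ℝ) ≠ 0 := by simp only [hc]; positivity
      field_simp
  have := hmain.sub_const 1
  rw [add_sub_cancel_right] at this
  refine this.congr' ?_
  filter_upwards [eventually_gt_atTop 0] with n hn
  have : (n : ℝ) ≠ 0 := by positivity
  field_simp
  ring

end LLN

/-- Transience of the lazily revealed walk: the projected walk is a random walk in three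
dimensions. -/
lemma lwalk_transient {d : ℕ} (h : 2 * 3 ≤ d) [NeZero d] (p : unitInterval) :
    ∀ᵐ w ∂(lawL d p), ∀ x : Site d, {n : ℕ | lwalk h w n = x}.Finite := by
  obtain ⟨C, hC0, hC⟩ := qk_le (Nat.pos_of_ne_zero (NeZero.ne d)) h
  have hsum : ∀ y : Fin 3 → ℤ, ∑' n : ℕ, lawL d p {w | Ywalk 3 w (n + 1) = y} ≠ ⊤ := by
    intro y
    have hs : Summable fun n : ℕ => C * ((n + 1 : ℕ) : ℝ) ^ (-(3 / 2 : ℝ)) :=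
      ((summable_nat_add_iff 1).2
        (Real.summable_nat_rpow (p := -(3 / 2 : ℝ)) |>.2 (by norm_num))).mul_left C
    refine ne_top_of_le_ne_top (ENNReal.ofReal_ne_top (r := ∑' n : ℕ, C *
      ((n + 1 : ℕ) : ℝ) ^ (-(3 / 2 : ℝ)))) ?_
    rw [ENNReal.ofReal_tsum_of_nonneg (fun n => by positivity) hs]
    refine ENNReal.tsum_le_tsum fun n => ?_
    have e1 := law_sum 3 (d := d) p (Finset.range (n + 1)) y
    have e2 : {w : Drv d | Ywalk 3 w (n + 1) = y} =
        {w | ∑ k ∈ Finset.range (n + 1), yinc 3 d (w k).1 = y} := rfl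
    rw [e2, e1, Finset.card_range]
    apply ENNReal.ofReal_le_ofReal
    refine (hC (n + 1) (Nat.succ_pos n) y).trans (le_of_eq ?_)
    have hx : (0 : ℝ) < ((n + 1 : ℕ) : ℝ) := by positivity
    rw [Real.sqrt_eq_rpow, ← Real.rpow_neg hx.le, ← Real.rpow_natCast, ← Real.rpow_mul hx.le]
    norm_num
  have hae : ∀ y : Fin 3 → ℤ, ∀ᵐ w ∂(lawL d p), ∀ᶠ n in atTop, Ywalk 3 w (n + 1) ≠ y := fun y =>
    ae_eventually_notMem (hsum y)
  filter_upwards [ae_all_iff.2 hae] with w hw x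
  obtain ⟨N, hN⟩ := eventually_atTop.1 (hw (Yproj h x))
  refine (Set.finite_Iio (N + 1)).subset fun n hn => ?_
  by_contra hlt
  rw [mem_Iio, not_lt] at hlt
  obtain ⟨k, rfl⟩ : ∃ k, n = k + 1 := ⟨n - 1, by omega⟩
  refine hN k (by omega) ?_
  have hn' : lwalk h w (k + 1) = x := hn
  rw [← Yproj_lwalk h, hn']

/-! ### The annealed law on paths -/

/-- A finite measure on the paths in a countable set is determined by the probabilities of following a
given path up to a given time. -/
lemma path_measure_ext {E : Type*} [Countable E] [MeasurableSpace E]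
    [MeasurableSingletonClass E] (M N : Measure (ℕ → E)) [IsFiniteMeasure M]
    (hMN : ∀ (n : ℕ) (x : ℕ → E), M {w | ∀ k ≤ n, w k = x k} = N {w | ∀ k ≤ n, w k = x k}) :
    M = N := by
  have hfr : ∀ n, N.map (Preorder.frestrictLe n) = M.map (Preorder.frestrictLe (π := fun _ => E) n) := by
    intro n
    rw [Measure.ext_iff_singleton]
    intro y
    have hm : Measurable (Preorder.frestrictLe (π := fun _ : ℕ => E) n) := Preorder.measurable_frestrictLe n
    rw [Measure.map_apply hm (measurableSet_singleton _),
      Measure.map_apply hm (measurableSet_singleton _)]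
    have : Preorder.frestrictLe (π := fun _ : ℕ => E) n ⁻¹' {y}
        = {w | ∀ k ≤ n, w k = (fun k => if hk : k ≤ n then y ⟨k, Finset.mem_Iic.2 hk⟩
            else y ⟨n, Finset.mem_Iic.2 le_rfl⟩) k} := by
      ext w
      simp only [mem_preimage, mem_singleton_iff, mem_ofPred_eq]
      constructor
      · intro h k hk
        rw [dif_pos hk, ← h]; rfl
      · intro h
        funext k
        have hk := Finset.mem_Iic.1 k.2
        have := h k hk
        rw [dif_pos hk] at this
        exact this
    rw [this, hMN]
  have hfam : IsProjectiveMeasureFamily (α := fun _ : ℕ => E)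
      (fun I : Finset ℕ => M.map (I.restrict (π := fun _ => E))) :=
    ProbabilityTheory.isProjectiveMeasureFamily_map_restrict (X := fun k (w : ℕ → E) => w k)
      (fun k => (measurable_pi_apply k).aemeasurable)
  -- both measures are projective limits of the finite-dimensional marginals of `M`
  have h1 : IsProjectiveLimit M (fun I : Finset ℕ => M.map (I.restrict (π := fun _ => E))) :=
    fun I => rfl
  have h2 : IsProjectiveLimit N (fun I : Finset ℕ => M.map (I.restrict (π := fun _ => E))) :=
    (isProjectiveLimit_nat_iff hfam N).2 hfr
  exact h1.unique h2

section
variable {d : ℕ}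

lemma stepVec_inj {a a' : Fin d} {c c' : Bool} (h : stepVec d (a, c) = stepVec d (a', c')) :
    a = a' ∧ c = c' := by
  have h1 := congrFun h a
  have h2 := congrFun h a'
  cases c <;> cases c' <;> by_cases haa : a = a' <;>
    simp [stepVec, haa] at h1 h2 ⊢

/-- The signs at the site `z` compatible with the signs `c k` seen along the path `x`. -/
def signSet (n : ℕ) (x : ℕ → Site d) (c : ℕ → Bool) (z : Site d) : Set Bool :=
  {b | ∀ k < n, x k = z → b = c k}

/-- `M` has the cylinder probabilities of the annealed walk in the orthant model: each step costs a
factor `1/d`, and each visited site costs the probability of its sign. -/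
def IsOrth [NeZero d] (p : unitInterval) (M : Measure (PathSpace d)) : Prop :=
  (∀ (n : ℕ) (x : ℕ → Site d) (a : ℕ → Fin d) (c : ℕ → Bool), x 0 = 0 →
    (∀ k < n, x (k + 1) = x k + stepVec d (a k, c k)) →
    M {w | ∀ k ≤ n, w k = x k} = ((d : ℝ≥0∞)⁻¹) ^ n *
      ∏ z ∈ (Finset.range n).image x, bern p (signSet n x c z)) ∧
  (∀ (n : ℕ) (x : ℕ → Site d), M {w | ∀ k ≤ n, w k = x k} ≠ 0 → x 0 = 0 ∧
    ∃ (a : ℕ → Fin d) (c : ℕ → Bool), ∀ k < n, x (k + 1) = x k + stepVec d (a k, c k))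

/-- The cylinder probabilities determine the law. -/
lemma IsOrth.unique [NeZero d] {p : unitInterval} {M N : Measure (PathSpace d)}
    [IsFiniteMeasure M] (hM : IsOrth p M) (hN : IsOrth p N) : M = N := by
  refine path_measure_ext M N fun n x => ?_
  by_cases hx : x 0 = 0 ∧
    ∃ (a : ℕ → Fin d) (c : ℕ → Bool), ∀ k < n, x (k + 1) = x k + stepVec d (a k, c k)
  · obtain ⟨h0, a, c, hac⟩ := hx
    rw [hM.1 n x a c h0 hac, hN.1 n x a c h0 hac]
  · have h1 := fun h => hx (hM.2 n x h)
    have h2 := fun h => hx (hN.2 n x h)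
    rw [not_not.1 h1, not_not.1 h2]

lemma measurableSet_cyl (n : ℕ) (x : ℕ → Site d) :
    MeasurableSet {w : PathSpace d | ∀ k ≤ n, w k = x k} := by
  have : {w : PathSpace d | ∀ k ≤ n, w k = x k} = ⋂ k, ⋂ (_ : k ≤ n), (fun w => w k) ⁻¹' {x k} := by
    ext w; simp
  rw [this]
  exact MeasurableSet.iInter fun k => MeasurableSet.iInter fun _ =>
    (measurable_pi_apply k) (measurableSet_singleton _)

/-- The second half of `IsOrth` for a process which starts at the origin and takes unit steps. -/
lemma orth_null_of_steps {Ω : Type*} [MeasurableSpace Ω] (Q : Measure Ω) (X : Ω → PathSpace d)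
    (hX : Measurable X) (h0 : ∀ w, X w 0 = 0)
    (hs : ∀ w k, ∃ a c, X w (k + 1) = X w k + stepVec d (a, c)) (n : ℕ) (x : ℕ → Site d)
    (hne : Q.map X {w | ∀ k ≤ n, w k = x k} ≠ 0) : x 0 = 0 ∧
    ∃ (a : ℕ → Fin d) (c : ℕ → Bool), ∀ k < n, x (k + 1) = x k + stepVec d (a k, c k) := by
  rw [Measure.map_apply hX (measurableSet_cyl n x)] at hne
  obtain ⟨w, hw⟩ := nonempty_of_measure_ne_zero hne
  have hw : ∀ k ≤ n, X w k = x k := hw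
  refine ⟨by rw [← hw 0 (Nat.zero_le _), h0], ?_⟩
  choose a c hac using hs w
  refine ⟨a, c, fun k hk => ?_⟩
  rw [← hw k hk.le, ← hw (k + 1) hk, hac]


lemma firstIdx_eq_of (x : ℕ → Site d) (k l : ℕ) (hkl : x k = x l) : firstIdx x k = firstIdx x l := by
  rw [firstIdx_eq_iff]
  obtain ⟨h2, h3⟩ := (firstIdx_eq_iff x l _).1 rfl
  rw [hkl]
  exact ⟨h2, h3⟩

/-- First visit times are in bijection with the visited sites; times which are not first visits carry no
constraint and contribute the factor `1`. -/
lemma prod_firstIdx (n : ℕ) (x : ℕ → Site d) (c : ℕ → Bool) (p : unitInterval) :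
    ∏ j ∈ Finset.range n, bern p {b | ∀ k < n, firstIdx x k = j → b = c k} =
      ∏ z ∈ (Finset.range n).image x, bern p (signSet n x c z) := by
  have himg : (Finset.range n).image x =
      ((Finset.range n).filter fun j => firstIdx x j = j).image x := by
    ext z
    simp only [Finset.mem_image, Finset.mem_filter, Finset.mem_range]
    constructor
    · rintro ⟨k, hk, rfl⟩
      refine ⟨firstIdx x k, ⟨(firstIdx_le x k).trans_lt hk, ?_⟩, firstIdx_spec x k⟩
      exact firstIdx_eq_of x _ _ (firstIdx_spec x k)
    · rintro ⟨k, hk, rfl⟩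
      exact ⟨k, hk.1, rfl⟩
  rw [himg, Finset.prod_image, Finset.prod_filter]
  · refine Finset.prod_congr rfl fun j hj => ?_
    split_ifs with h
    · congr 1
      ext b
      simp only [signSet, mem_ofPred_eq]
      refine forall_congr' fun k => imp_congr_right fun _ => ?_
      have : firstIdx x k = j ↔ x k = x j := by
        constructor
        · intro h1
          rw [← h1, firstIdx_spec x k]
        · intro h1
          rw [firstIdx_eq_of x _ _ h1, h]
      rw [this]
    · have : {b : Bool | ∀ k < n, firstIdx x k = j → b = c k} = univ := by
        refine eq_univ_of_forall fun b k hk hkj => ?_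
        exfalso
        apply h
        have h1 := firstIdx_eq_of x (firstIdx x k) k (firstIdx_spec x k)
        rw [hkj] at h1
        exact h1
      rw [this, measure_univ]
  · intro j hj k hk hjk
    simp only [Finset.coe_filter, mem_ofPred_eq] at hj hk
    rw [← hj.2, ← hk.2]
    exact firstIdx_eq_of x _ _ hjk

lemma lwalk_meas {D : ℕ} [NeZero d] (h : 2 * D ≤ d) :
    Measurable (fun (w : Drv d) (n : ℕ) => lwalk h w n) :=
  measurable_pi_lambda _ fun n => dep_measurable (lwalk_dep h n)

/-- The lazily revealed walk has the annealed law. -/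
lemma lwalk_orth {D : ℕ} [NeZero d] (h : 2 * D ≤ d) (p : unitInterval) :
    IsOrth p ((lawL d p).map (fun w n => lwalk h w n)) := by
  refine ⟨fun n x a c h0 hx => ?_, ?_⟩
  · rw [Measure.map_apply (lwalk_meas h) (measurableSet_cyl n x)]
    set a' : ℕ → Fin d := fun k => if c k = true then a k else partner h (a k) with ha'
    have hset : (fun (w : Drv d) (n : ℕ) => lwalk h w n) ⁻¹' {w | ∀ k ≤ n, w k = x k} =
        Set.pi (Finset.range n : Set ℕ) (fun j =>
          ({a' j} : Set (Fin d)) ×ˢ {b : Bool | ∀ k < n, firstIdx x k = j → b = c k}) := by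
      ext w
      have hstep : ∀ k, svec h (w (firstIdx x k)).2 (w k).1 = stepVec d (a k, c k) ↔
          (w k).1 = a' k ∧ (w (firstIdx x k)).2 = c k := by
        intro k
        unfold svec
        constructor
        · intro he
          obtain ⟨h1, h2⟩ := stepVec_inj he
          refine ⟨?_, h2⟩
          rw [h2] at h1
          simp only [ha']
          split_ifs with hc
          · rwa [if_pos hc] at h1
          · rw [if_neg hc] at h1
            rw [← h1, partner_partner]
        · rintro ⟨h1, h2⟩
          rw [h1, h2]
          simp only [ha']
          split_ifs with hc
          · rfl
          · rw [partner_partner]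
      simp only [mem_preimage, mem_ofPred_eq, Set.mem_pi, Finset.coe_range, mem_Iio, mem_prod,
        mem_singleton_iff]
      constructor
      · intro hw
        have hk : ∀ k < n, (w k).1 = a' k ∧ (w (firstIdx x k)).2 = c k := by
          intro k hk
          rw [← hstep]
          have h1 := lwalk_succ h w k
          rw [hw (k + 1) hk, hw k hk.le, hx k hk,
            firstIdx_congr (lwalk h w) x k fun m hm => hw m (by omega)] at h1
          exact (add_left_cancel h1).symm
        refine fun j hj => ⟨(hk j hj).1, fun k hkn hkj => ?_⟩
        rw [← hkj]
        exact (hk k hkn).2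
      · intro hw
        refine lwalk_unique h w x n h0 fun k hk => ?_
        rw [hx k hk, (hstep k).2]
        exact ⟨(hw k hk).1, (hw _ ((firstIdx_le x k).trans_lt hk)).2 k hk rfl⟩
    rw [hset, lawL, Measure.infinitePi_pi _ fun _ _ => MeasurableSet.of_discrete]
    simp only [kap, Measure.prod_prod, unif_singleton]
    rw [Finset.prod_mul_distrib, Finset.prod_const, Finset.card_range, prod_firstIdx]
  · exact orth_null_of_steps _ _ (lwalk_meas h) (fun w => lwalk_zero h w)
      (fun w k => ⟨_, _, lwalk_succ h w k⟩)

end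

/-! ### The monotone coupling -/

section
variable {d : ℕ}

/-- The position after `m` steps from positive sites and `l` steps from negative sites, when these
steps are read off two independent lists of directions. -/
def lpos (ξ : Bool × ℕ → Fin d) (m l : ℕ) : Site d :=
  ∑ j ∈ Finset.range m, stepVec d (ξ (true, j), true) +
    ∑ j ∈ Finset.range l, stepVec d (ξ (false, j), false)

/-- The number of steps from positive sites among the first `n` steps. -/
noncomputable def lplus (η : Site d → Bool) (ξ : Bool × ℕ → Fin d) : ℕ → ℕ
  | 0 => 0
  | n + 1 => lplus η ξ n + if η (lpos ξ (lplus η ξ n) (n - lplus η ξ n)) = true then 1 else 0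

/-- The walk in the environment `η` with steps read off the lists `ξ`. -/
noncomputable def pwalk (η : Site d → Bool) (ξ : Bool × ℕ → Fin d) (n : ℕ) : Site d :=
  lpos ξ (lplus η ξ n) (n - lplus η ξ n)

variable (η η' : Site d → Bool) (ξ : Bool × ℕ → Fin d)

lemma lplus_succ (n : ℕ) :
    lplus η ξ (n + 1) = lplus η ξ n + if η (pwalk η ξ n) = true then 1 else 0 := rfl

lemma lplus_le (n : ℕ) : lplus η ξ n ≤ n := by
  induction n with
  | zero => exact le_rfl
  | succ n ih => rw [lplus_succ]; split_ifs <;> omega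

lemma pwalk_zero : pwalk η ξ 0 = 0 := by simp [pwalk, lpos, lplus]

lemma pwalk_succ (n : ℕ) : pwalk η ξ (n + 1) = pwalk η ξ n +
    stepVec d (ξ (η (pwalk η ξ n),
      if η (pwalk η ξ n) = true then lplus η ξ n else n - lplus η ξ n), η (pwalk η ξ n)) := by
  have hle := lplus_le η ξ n
  conv_lhs => unfold pwalk
  rw [lplus_succ]
  cases hb : η (pwalk η ξ n)
  · have e : n + 1 - lplus η ξ n = n - lplus η ξ n + 1 := by omega
    simp only [Bool.false_eq_true, if_false, add_zero, e]
    unfold pwalk lpos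
    rw [Finset.sum_range_succ (n := n - lplus η ξ n), add_assoc]
  · have e : n + 1 - (lplus η ξ n + 1) = n - lplus η ξ n := by omega
    simp only [if_true, e]
    unfold pwalk lpos
    rw [Finset.sum_range_succ (n := lplus η ξ n), add_right_comm]

/-- The counter `lplus` counts the visits of the walk to positive sites, and the complementary counter
its visits to negative sites. -/
lemma lplus_eq (n : ℕ) :
    lplus η ξ n = ((Finset.range n).filter fun l => η (pwalk η ξ l) = true).card ∧
    n - lplus η ξ n = ((Finset.range n).filter fun l => η (pwalk η ξ l) = false).card := by
  induction n with
  | zero => simp [lplus]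
  | succ n ih =>
    have hle := lplus_le η ξ n
    rw [lplus_succ, Finset.range_add_one, Finset.filter_insert, Finset.filter_insert]
    cases hb : η (pwalk η ξ n)
    · simp only [Bool.false_eq_true, if_false, if_true]
      rw [Finset.card_insert_of_notMem (by simp)]
      omega
    · simp only [Bool.true_eq_false, if_false, if_true]
      rw [Finset.card_insert_of_notMem (by simp)]
      omega

/-- More positive sites produce more positive steps. -/
lemma lplus_mono (hη : ∀ z, η z = true → η' z = true) (n : ℕ) : lplus η ξ n ≤ lplus η' ξ n := by
  induction n with
  | zero => exact le_rfl
  | succ n ih =>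
    rw [lplus_succ, lplus_succ]
    rcases Nat.lt_or_ge (lplus η ξ n) (lplus η' ξ n) with h1 | h1
    · split_ifs <;> omega
    -- the two walks are at the same site when the counts agree
    · have h2 : lplus η ξ n = lplus η' ξ n := le_antisymm ih h1
      have h3 : pwalk η ξ n = pwalk η' ξ n := by unfold pwalk; rw [h2]
      rw [h2, h3]
      by_cases h4 : η (pwalk η' ξ n) = true
      · rw [if_pos h4, if_pos (hη _ h4)]
      · rw [if_neg h4]; omega

/-- Positive steps increase, and negative steps decrease, every coordinate; with more positive sites the
walk uses a longer part of the positive list and a shorter part of the negative one. -/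
lemma pwalk_mono (hη : ∀ z, η z = true → η' z = true) (n : ℕ) (i : Fin d) :
    pwalk η ξ n i ≤ pwalk η' ξ n i := by
  have h1 := lplus_mono η η' ξ hη n
  unfold pwalk lpos
  simp only [Pi.add_apply, Finset.sum_apply]
  gcongr ?_ + ?_
  · refine Finset.sum_le_sum_of_subset_of_nonneg (Finset.range_mono h1) fun j _ _ => ?_
    simp only [stepVec, if_true, Pi.single_apply]
    split_ifs <;> simp
  · have h2 : n - lplus η' ξ n ≤ n - lplus η ξ n := by omega
    rw [← Finset.sum_sdiff (Finset.range_mono h2)]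
    rw [add_le_iff_nonpos_left]
    refine Finset.sum_nonpos fun j _ => ?_
    simp only [stepVec, Bool.false_eq_true, if_false, Pi.neg_apply, Pi.single_apply]
    split_ifs <;> simp

/-- The index in the list of the direction used at step `k` along a path with signs `c`. -/
def lidx (c : ℕ → Bool) (k : ℕ) : Bool × ℕ :=
  (c k, ((Finset.range k).filter fun l => c l = c k).card)

lemma lidx_inj (c : ℕ → Bool) : Function.Injective (lidx c) := by
  have key : ∀ j k, j < k → lidx c j ≠ lidx c k := by
    intro j k hjk he
    simp only [lidx, Prod.mk.injEq] at he
    obtain ⟨h1, h2⟩ := he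
    rw [h1] at h2
    refine absurd h2 (ne_of_lt (Finset.card_lt_card ?_))
    rw [Finset.ssubset_iff_of_subset (Finset.filter_subset_filter _ (Finset.range_mono hjk.le))]
    exact ⟨j, by simp [hjk, h1], by simp⟩
  intro j k he
  rcases lt_trichotomy j k with h | h | h
  · exact absurd he (key j k h)
  · exact h
  · exact absurd he.symm (key k j h)

/-- The walk follows a given path exactly when the environment has the required signs and the list
entries met on the way, which are pairwise distinct by `lidx_inj`, have the required values. -/
lemma pwalk_cyl (n : ℕ) (x : ℕ → Site d) (a : ℕ → Fin d) (c : ℕ → Bool) (h0 : x 0 = 0)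
    (hx : ∀ k < n, x (k + 1) = x k + stepVec d (a k, c k)) :
    (∀ k ≤ n, pwalk η ξ k = x k) ↔ (∀ k < n, η (x k) = c k ∧ ξ (lidx c k) = a k) := by
  induction n with
  | zero => simp [pwalk_zero, h0]
  | succ n ih =>
    have ih := ih fun k hk => hx k (by omega)
    have h1 : (∀ k ≤ n + 1, pwalk η ξ k = x k) ↔
        (∀ k ≤ n, pwalk η ξ k = x k) ∧ pwalk η ξ (n + 1) = x (n + 1) := by
      constructor
      · intro h; exact ⟨fun k hk => h k (by omega), h _ le_rfl⟩
      · rintro ⟨h, h'⟩ k hk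
        rcases Nat.le_succ_iff.1 hk with h2 | rfl
        · exact h k h2
        · exact h'
    have h2 : (∀ k < n + 1, η (x k) = c k ∧ ξ (lidx c k) = a k) ↔
        (∀ k < n, η (x k) = c k ∧ ξ (lidx c k) = a k) ∧ (η (x n) = c n ∧ ξ (lidx c n) = a n) := by
      constructor
      · intro h; exact ⟨fun k hk => h k (by omega), h _ (Nat.lt_succ_self n)⟩
      · rintro ⟨h, h'⟩ k hk
        rcases Nat.lt_succ_iff_lt_or_eq.1 hk with h2 | rfl
        · exact h k h2
        · exact h'
    rw [h1, h2, ← ih]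
    refine and_congr_right fun hw => ?_
    have hc := ih.1 hw
    rw [pwalk_succ, hw n le_rfl, hx n (Nat.lt_succ_self n)]
    -- along the path, the counters agree with the indices computed from the signs `c`
    have hidx : (η (x n), if η (x n) = true then lplus η ξ n else n - lplus η ξ n) =
        (η (x n), ((Finset.range n).filter fun l => c l = η (x n)).card) := by
      have hcard : ∀ b : Bool, ((Finset.range n).filter fun l => c l = b) =
          ((Finset.range n).filter fun l => η (pwalk η ξ l) = b) := by
        intro b
        refine Finset.filter_congr fun l hl => ?_
        rw [Finset.mem_range] at hl
        rw [hw l hl.le, (hc l hl).1]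
      rw [hcard]
      have := lplus_eq η ξ n
      cases hb : η (x n)
      · simp [this.2]
      · simp [this.1]
    rw [hidx]
    constructor
    · intro he
      obtain ⟨h3, h4⟩ := stepVec_inj (add_left_cancel he)
      rw [h4] at h3
      exact ⟨h4, h3⟩
    · rintro ⟨h3, h4⟩
      rw [h3]
      rw [lidx] at h4
      rw [h4]

/-- The environment obtained from independent uniform variables by thresholding. -/
noncomputable def thr (p : unitInterval) (U : Site d → unitInterval) (z : Site d) : Bool :=
  decide (U z < p)

/-- The sample space carrying the coupled walks. -/
abbrev CplSpace (d : ℕ) := (Site d → unitInterval) × (Bool × ℕ → Fin d)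

/-- The coupling measure: uniform variables at the sites, and independent lists of directions. -/
noncomputable def lawC (d : ℕ) [NeZero d] : Measure (CplSpace d) :=
  (Measure.infinitePi fun _ : Site d => (volume : Measure unitInterval)).prod
    (Measure.infinitePi fun _ : Bool × ℕ => unif d)

instance [NeZero d] : IsProbabilityMeasure (lawC d) := by unfold lawC; infer_instance

lemma lpos_meas (m l : ℕ) : Measurable (fun ξ : Bool × ℕ → Fin d => lpos ξ m l) := by
  unfold lpos
  refine Measurable.add (Finset.measurable_sum _ fun j _ => ?_) (Finset.measurable_sum _ fun j _ => ?_)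
  · exact (Measurable.of_discrete (f := fun u : Fin d => stepVec d (u, true))).comp
      (measurable_pi_apply (true, j))
  · exact (Measurable.of_discrete (f := fun u : Fin d => stepVec d (u, false))).comp
      (measurable_pi_apply (false, j))

lemma thr_meas (p : unitInterval) :
    Measurable (fun q : Site d × (Site d → unitInterval) => thr p q.2 q.1) :=
  measurable_from_prod_countable_right fun z => (measurable_thr p).comp (measurable_pi_apply z)

lemma lplus_meas (p : unitInterval) (n : ℕ) :
    Measurable (fun q : CplSpace d => lplus (thr p q.1) q.2 n) := by
  induction n with
  | zero => exact measurable_const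
  | succ n ih =>
    have h1 : Measurable (fun r : ℕ × CplSpace d =>
        r.1 + if thr p r.2.1 (lpos r.2.2 r.1 (n - r.1)) = true then 1 else 0) := by
      refine measurable_from_prod_countable_right fun m => ?_
      have h2 : Measurable fun q : CplSpace d => thr p q.1 (lpos q.2 m (n - m)) :=
        (thr_meas p).comp (((lpos_meas m (n - m)).comp measurable_snd).prodMk measurable_fst)
      exact (Measurable.of_discrete (f := fun b : Bool => m + if b = true then 1 else 0)).comp h2
    exact h1.comp (ih.prodMk measurable_id)

lemma pwalk_meas (p : unitInterval) :
    Measurable (fun (q : CplSpace d) (n : ℕ) => pwalk (thr p q.1) q.2 n) := by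
  refine measurable_pi_lambda _ fun n => ?_
  have h1 : Measurable (fun r : ℕ × CplSpace d => lpos r.2.2 r.1 (n - r.1)) :=
    measurable_from_prod_countable_right fun m => (lpos_meas m (n - m)).comp measurable_snd
  exact h1.comp ((lplus_meas p n).prodMk measurable_id)

/-- The walk driven by two lists of directions has the annealed law. -/
lemma pwalk_orth [NeZero d] (p : unitInterval) :
    IsOrth p ((lawC d).map (fun q n => pwalk (thr p q.1) q.2 n)) := by
  refine ⟨fun n x a c h0 hx => ?_, ?_⟩
  · rw [Measure.map_apply (pwalk_meas p) (measurableSet_cyl n x)]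
    set T : Bool × ℕ → Set (Fin d) := fun s => {u | ∀ k < n, lidx c k = s → u = a k} with hT
    have hset : (fun (q : CplSpace d) (n : ℕ) => pwalk (thr p q.1) q.2 n) ⁻¹'
          {w | ∀ k ≤ n, w k = x k} =
        (Set.pi ((Finset.range n).image x : Set (Site d)) fun z =>
            (fun u : unitInterval => (decide (u < p) : Bool)) ⁻¹' signSet n x c z) ×ˢ
          (Set.pi ((Finset.range n).image (lidx c) : Set (Bool × ℕ)) T) := by
      ext ⟨U, ξ⟩
      simp only [mem_preimage, mem_ofPred_eq]
      rw [pwalk_cyl _ _ n x a c h0 hx, mem_prod, Set.mem_pi, Set.mem_pi]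
      simp only [mem_preimage, Finset.coe_image, Finset.coe_range, forall_mem_image, mem_Iio,
        signSet, mem_ofPred_eq, hT, thr]
      constructor
      · intro h
        refine ⟨fun k hk l hl hlk => ?_, fun k hk l hl hlk => ?_⟩
        · rw [← hlk]; exact (h l hl).1
        · rw [← hlk]; exact (h l hl).2
      · rintro ⟨h1, h2⟩ k hk
        exact ⟨h1 hk k hk rfl, h2 hk k hk rfl⟩
    have hTs : ∀ k < n, T (lidx c k) = {a k} := by
      intro k hk
      ext u
      simp only [hT, mem_ofPred_eq, mem_singleton_iff]
      constructor
      · intro h; exact h k hk rfl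
      · intro h l _ hl
        rw [h, lidx_inj c hl]
    rw [hset, lawC, Measure.prod_prod,
      Measure.infinitePi_pi _ fun _ _ => measurable_thr p MeasurableSet.of_discrete,
      Measure.infinitePi_pi _ fun _ _ => MeasurableSet.of_discrete,
      Finset.prod_image fun j _ k _ h => lidx_inj c h, mul_comm]
    congr 1
    · rw [Finset.prod_congr rfl fun k hk => by rw [hTs k (Finset.mem_range.1 hk), unif_singleton],
        Finset.prod_const, Finset.card_range]
    · refine Finset.prod_congr rfl fun z _ => ?_
      rw [bern, Measure.map_apply (measurable_thr p) MeasurableSet.of_discrete]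
  · exact orth_null_of_steps _ _ (pwalk_meas p) (fun w => pwalk_zero _ _)
      (fun w k => ⟨_, _, pwalk_succ _ _ k⟩)

end

/-! ### The orthant model as a random walk in random environment -/

section
variable {d : ℕ}

/-- The environment values of sign `c`: the uniform distribution on the unit vectors of sign `c`. -/
def oSet (d : ℕ) (c : Bool) : Set (EnvDist d) :=
  {γ | ∀ i : Fin d × Bool, γ.prob (stepVec d i) = if i.2 = c then (d : ℝ)⁻¹ else 0}

lemma measurableSet_oSet (c : Bool) : MeasurableSet (oSet d c) := by
  have h : Measurable (EnvDist.prob : EnvDist d → Site d → ℝ) := comap_measurable _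
  have : oSet d c = ⋂ i : Fin d × Bool, (fun γ : EnvDist d => γ.prob (stepVec d i)) ⁻¹'
      {if i.2 = c then (d : ℝ)⁻¹ else 0} := by
    ext γ; simp [oSet]
  rw [this]
  exact MeasurableSet.iInter fun i =>
    ((measurable_pi_apply (stepVec d i)).comp h) (measurableSet_singleton _)

lemma oSet_eq [NeZero d] {γ : EnvDist d} {b c : Bool} (hb : γ ∈ oSet d b) (hc : γ ∈ oSet d c) :
    b = c := by
  by_contra hbc
  have h1 := hb (0, b)
  have h2 := hc (0, b)
  rw [h1, if_pos rfl, if_neg hbc] at h2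
  exact inv_ne_zero (NeZero.ne _) h2

/-- The environment values compatible with the signs `c` seen at `z` along the path `x`. -/
def envSet (n : ℕ) (x : ℕ → Site d) (c : ℕ → Bool) (z : Site d) : Set (EnvDist d) :=
  {γ | ∀ k < n, x k = z → γ ∈ oSet d (c k)}

lemma measurableSet_envSet (n : ℕ) (x : ℕ → Site d) (c : ℕ → Bool) (z : Site d) :
    MeasurableSet (envSet n x c z) := by
  have : envSet n x c z = ⋂ k, ⋂ (_ : k < n), ⋂ (_ : x k = z), oSet d (c k) := by
    ext γ; simp [envSet]
  rw [this]
  exact MeasurableSet.iInter fun k => MeasurableSet.iInter fun _ => MeasurableSet.iInter fun _ =>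
    measurableSet_oSet _

/-- In an environment of the orthant model the quenched probability of a path is `d^{-n}` if all signs
seen along it are the right ones, and zero otherwise. -/
lemma pathWeight_eq (n : ℕ) (x : ℕ → Site d) (a : ℕ → Fin d) (c : ℕ → Bool)
    (hx : ∀ k < n, x (k + 1) = x k + stepVec d (a k, c k)) (ω : EnvOmega d)
    (hω : ∀ z, ω z ∈ oSet d true ∨ ω z ∈ oSet d false) :
    pathWeight ω n x = ({ω | ∀ z ∈ (Finset.range n).image x, ω z ∈ envSet n x c z} :
      Set (EnvOmega d)).indicator (fun _ => ((d : ℝ)⁻¹) ^ n) ω := by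
  have hstep : ∀ k < n, x (k + 1) - x k = stepVec d (a k, c k) := fun k hk => by
    rw [hx k hk, add_sub_cancel_left]
  by_cases h : ∀ z ∈ (Finset.range n).image x, ω z ∈ envSet n x c z
  · rw [indicator_of_mem (by exact h), pathWeight]
    rw [Finset.prod_congr rfl fun k hk => ?_, Finset.prod_const, Finset.card_range]
    have hk' := Finset.mem_range.1 hk
    rw [hstep k hk', h _ (Finset.mem_image_of_mem _ hk) k hk' rfl, if_pos rfl]
  · rw [indicator_of_notMem (by exact h), pathWeight]
    push Not at h
    obtain ⟨z, _, hz⟩ := h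
    simp only [envSet, mem_ofPred_eq] at hz
    push Not at hz
    obtain ⟨k, hk, rfl, hk'⟩ := hz
    refine Finset.prod_eq_zero (Finset.mem_range.2 hk) ?_
    have h2 : ω (x k) ∈ oSet d (!c k) := by
      have := hω (x k)
      cases hc : c k <;> simp_all
    rw [hstep k hk, h2, if_neg (by simp)]

lemma measurableSet_transient :
    MeasurableSet {w : PathSpace d | ∀ x : Site d, {n : ℕ | w n = x}.Finite} := by
  have : {w : PathSpace d | ∀ x : Site d, {n : ℕ | w n = x}.Finite} =
      ⋂ x : Site d, ⋃ N : ℕ, ⋂ n : ℕ, ⋂ (_ : N < n), (fun w : PathSpace d => w n) ⁻¹' {x}ᶜ := by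
    ext w
    simp only [mem_ofPred_eq, mem_iInter, mem_iUnion, mem_preimage, mem_compl_iff,
      mem_singleton_iff]
    refine forall_congr' fun x => ?_
    refine Iff.trans ⟨fun h => h.bddAbove, fun ⟨N, hN⟩ => (finite_Iic N).subset hN⟩ ?_
    refine exists_congr fun N => ?_
    simp only [mem_upperBounds, mem_ofPred_eq]
    exact forall_congr' fun n => by rw [← not_le, not_imp_not]
  rw [this]
  exact MeasurableSet.iInter fun x => MeasurableSet.iUnion fun N => MeasurableSet.iInter fun n =>
    MeasurableSet.iInter fun _ => (measurable_pi_apply n) (measurableSet_singleton _).compl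

lemma measurableSet_velocity (v : Fin d → ℝ) :
    MeasurableSet {w : PathSpace d |
      Tendsto (fun n : ℕ => (n : ℝ)⁻¹ • (fun i => ((w n i : ℤ) : ℝ))) atTop (𝓝 v)} := by
  refine measurableSet_tendsto (𝓝 v) fun n => ?_
  refine measurable_pi_lambda _ fun i => ?_
  have h1 : Measurable fun w : PathSpace d => ((w n i : ℤ) : ℝ) :=
    (Measurable.of_discrete (f := fun x : Site d => ((x i : ℤ) : ℝ))).comp (measurable_pi_apply n)
  exact h1.const_mul _

/-- The two values of the environment carry the Bernoulli weights. -/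
lemma oSet_bern {μ : Measure (EnvDist d)} {p : unitInterval}
    (hμ : μ {γ : EnvDist d | ∀ i : Fin d × Bool,
          γ.prob (stepVec d i) = if i.2 = true then (d : ℝ)⁻¹ else 0} = ENNReal.ofReal p ∧
      μ {γ : EnvDist d | ∀ i : Fin d × Bool,
          γ.prob (stepVec d i) = if i.2 = true then 0 else (d : ℝ)⁻¹} =
        ENNReal.ofReal (1 - p)) (c : Bool) : μ (oSet d c) = bern p {c} := by
  cases c
  · rw [bern_false, ← hμ.2]
    congr 1
    ext γ
    refine forall_congr' fun i => ?_
    cases i.2 <;> simp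
  · rw [bern_true, ← hμ.1]
    rfl

variable [NeZero d] {p : unitInterval} {μ : Measure (EnvDist d)}

/-- At a visited site both sets impose the common sign of all the visits, or are empty when two visits
disagree. -/
lemma envSet_measure (hμ : ∀ c, μ (oSet d c) = bern p {c}) (n : ℕ) (x : ℕ → Site d)
    (c : ℕ → Bool) {z : Site d} (hz : z ∈ (Finset.range n).image x) :
    μ (envSet n x c z) = bern p (signSet n x c z) := by
  obtain ⟨k, hk, rfl⟩ := Finset.mem_image.1 hz
  rw [Finset.mem_range] at hk
  by_cases h : c k ∈ signSet n x c (x k)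
  · have h1 : envSet n x c (x k) = oSet d (c k) := by
      ext γ
      exact ⟨fun hγ => hγ k hk rfl, fun hγ l hl hlk => h l hl hlk ▸ hγ⟩
    have h2 : signSet n x c (x k) = {c k} := by
      ext b
      refine ⟨fun hb => hb k hk rfl, ?_⟩
      rintro rfl
      exact h
    rw [h1, h2, hμ]
  · have h1 : envSet n x c (x k) = ∅ := by
      refine eq_empty_of_forall_notMem fun γ hγ => h fun l hl hlk => ?_
      exact oSet_eq (hγ k hk rfl) (hγ l hl hlk)
    have h2 : signSet n x c (x k) = ∅ := by
      refine eq_empty_of_forall_notMem fun b hb => h ?_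
      rw [← show b = c k from hb k hk rfl]
      exact hb
    rw [h1, h2, measure_empty, measure_empty]

/-- The two values of the environment exhaust the mass, so almost every environment consists of them. -/
lemma ae_oSet (hμ : ∀ c, μ (oSet d c) = bern p {c}) {ν : Measure (EnvOmega d)}
    (hν : IsIIDEnv μ ν) : ∀ᵐ ω ∂ν, ∀ z, ω z ∈ oSet d true ∨ ω z ∈ oSet d false := by
  rw [ae_all_iff]
  intro z
  have hm : MeasurableSet (oSet d true ∪ oSet d false) :=
    (measurableSet_oSet _).union (measurableSet_oSet _)
  have h1 := hν.2.2 {z} (fun _ => oSet d true ∪ oSet d false) fun _ _ => hm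
  have hdisj : Disjoint (oSet d true) (oSet d false) :=
    Set.disjoint_left.2 fun γ h h' => Bool.noConfusion (oSet_eq h h')
  have := hν.2.1
  rw [Finset.prod_singleton, measure_union hdisj (measurableSet_oSet _), hμ, hμ, bern_true,
    bern_false, ← ENNReal.ofReal_add p.2.1 (sub_nonneg.2 p.2.2), add_sub_cancel,
    ENNReal.ofReal_one] at h1
  have hm' : MeasurableSet {ω : EnvOmega d | ω z ∈ oSet d true ∪ oSet d false} :=
    (measurable_pi_apply z) hm
  simp only [Finset.mem_singleton, forall_eq] at h1
  exact (prob_compl_eq_zero_iff hm').2 h1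

/-- The path of the orthant model has the annealed law computed site by site. -/
lemma rwre_orth (hμ : ∀ c, μ (oSet d c) = bern p {c}) {P : Measure (RWSpace d)}
    (hP : IsRWRE μ P) : IsOrth p (P.map Prod.snd) := by
  obtain ⟨hP1, hν, hcyl⟩ := hP
  have := hν.2.1
  have hcyl' : ∀ (n : ℕ) (x : ℕ → Site d), ((P.map Prod.snd) {w | ∀ k ≤ n, w k = x k}).toReal =
      (if x 0 = 0 then (1 : ℝ) else 0) * ∫ ω, pathWeight ω n x ∂(P.map Prod.fst) := by
    intro n x
    have := hcyl n x univ MeasurableSet.univ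
    simp only [mem_univ, true_and, Measure.restrict_univ] at this
    rw [Measure.map_apply measurable_snd (measurableSet_cyl n x), ← this]
    rfl
  have : IsProbabilityMeasure (P.map Prod.snd) :=
    Measure.isProbabilityMeasure_map measurable_snd.aemeasurable
  refine ⟨fun n x a c h0 hx => ?_, fun n x hne => ?_⟩
  · have h1 := hcyl' n x
    set S : Set (EnvOmega d) := {ω | ∀ z ∈ (Finset.range n).image x, ω z ∈ envSet n x c z} with hS
    have hSm : MeasurableSet S := by
      have : S = ⋂ z ∈ (Finset.range n).image x, (fun ω : EnvOmega d => ω z) ⁻¹' envSet n x c z := by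
        ext ω; simp [hS]
      rw [this]
      exact Finset.measurableSet_biInter _ fun z _ =>
        (measurable_pi_apply z) (measurableSet_envSet n x c z)
    have hνS : (P.map Prod.fst) S =
        ∏ z ∈ (Finset.range n).image x, bern p (signSet n x c z) := by
      rw [hS, hν.2.2 _ _ fun z _ => measurableSet_envSet n x c z]
      exact Finset.prod_congr rfl fun z hz => envSet_measure hμ n x c hz
    rw [if_pos h0, one_mul, integral_congr_ae ((ae_oSet hμ hν).mono fun ω hω =>
      pathWeight_eq n x a c hx ω hω), integral_indicator_const _ hSm, smul_eq_mul, Measure.real] at h1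
    rw [← hνS, ← ENNReal.toReal_eq_toReal_iff' (measure_ne_top _ _), h1, ENNReal.toReal_mul,
      ENNReal.toReal_pow, ENNReal.toReal_inv, ENNReal.toReal_natCast, mul_comm]
    exact ENNReal.mul_ne_top (ENNReal.pow_ne_top (ENNReal.inv_ne_top.2 (NeZero.ne _)))
      (measure_ne_top _ _)
  · have h1 := hcyl' n x
    have h2 : ((P.map Prod.snd) {w | ∀ k ≤ n, w k = x k}).toReal ≠ 0 :=
      ENNReal.toReal_ne_zero.2 ⟨hne, measure_ne_top _ _⟩
    rw [h1] at h2
    refine ⟨by_contra fun h => h2 (by rw [if_neg h, zero_mul]), ?_⟩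
    have h3 : ∃ ω : EnvOmega d, pathWeight ω n x ≠ 0 := by
      by_contra h
      push Not at h
      exact h2 (by simp [h])
    obtain ⟨ω, hω⟩ := h3
    have h4 : ∀ k, ∃ i, k < n → x (k + 1) = x k + stepVec d i := by
      intro k
      by_cases hk : k < n
      · obtain ⟨i, hi⟩ := (ω (x k)).support _
          (Finset.prod_ne_zero_iff.1 hω k (Finset.mem_range.2 hk))
        exact ⟨i, fun _ => by rw [← hi, add_sub_cancel]⟩
      · exact ⟨(0, true), fun h => absurd h hk⟩
    choose i hi using h4
    exact ⟨fun k => (i k).1, fun k => (i k).2, hi⟩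

/-- Almost sure properties of the lazily revealed walk hold for every realisation of its law. -/
lemma IsOrth.ae_mem {D : ℕ} (h : 2 * D ≤ d) {M : Measure (PathSpace d)} [IsFiniteMeasure M]
    (hM : IsOrth p M) {S : Set (PathSpace d)} (hS : MeasurableSet S)
    (hae : ∀ᵐ w ∂(lawL d p), (fun n => lwalk h w n) ∈ S) : ∀ᵐ w ∂M, w ∈ S := by
  rw [hM.unique (lwalk_orth h p)]
  exact (ae_map_iff (lwalk_meas h).aemeasurable hS).2 hae

/-- Transfer of almost sure properties from the lazily revealed walk to the given walk. -/
lemma rwre_prob_one {D : ℕ} (h : 2 * D ≤ d) (hμ : ∀ c, μ (oSet d c) = bern p {c})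
    {P : Measure (RWSpace d)} (hP : IsRWRE μ P) {S : Set (PathSpace d)} (hS : MeasurableSet S)
    (hae : ∀ᵐ w ∂(lawL d p), (fun n => lwalk h w n) ∈ S) : P {q | q.2 ∈ S} = 1 := by
  have := hP.1
  have : IsProbabilityMeasure (P.map Prod.snd) :=
    Measure.isProbabilityMeasure_map measurable_snd.aemeasurable
  have h1 := (rwre_orth hμ hP).ae_mem h hS hae
  replace h1 := (ae_map_iff measurable_snd.aemeasurable hS).1 h1
  exact (prob_compl_eq_zero_iff (measurable_snd hS)).1 h1

/-- The mean displacement is nondecreasing in `p`, by the coupling of the walks driven by lists. -/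
lemma Xm_mono (h : 2 * 5 ≤ d) (i : Fin d) (n : ℕ) : Monotone fun p => Xm h i p n := by
  have hm : Measurable fun w : PathSpace d => ((w n i : ℤ) : ℝ) :=
    (Measurable.of_discrete (f := fun x : Site d => ((x i : ℤ) : ℝ))).comp (measurable_pi_apply n)
  -- both realisations have the same law, hence the same mean
  have hE : ∀ p, Xm h i p n = ∫ q, ((pwalk (thr p q.1) q.2 n i : ℤ) : ℝ) ∂(lawC d) := by
    intro p
    have h1 := (lwalk_orth h p).unique (pwalk_orth p)
    have h2 := integral_map (μ := lawL d p) (lwalk_meas h).aemeasurable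
      (hm.aestronglyMeasurable (μ := (lawL d p).map fun w n => lwalk h w n))
    rw [h1, integral_map (pwalk_meas p).aemeasurable hm.aestronglyMeasurable] at h2
    exact h2.symm
  have hI : ∀ p, Integrable (fun q : CplSpace d => ((pwalk (thr p q.1) q.2 n i : ℤ) : ℝ))
      (lawC d) := by
    intro p
    have h1 := (lwalk_orth h p).unique (pwalk_orth p)
    have h2 : Integrable (fun w : PathSpace d => ((w n i : ℤ) : ℝ))
        ((lawL d p).map fun w n => lwalk h w n) :=
      (integrable_map_measure hm.aestronglyMeasurable (lwalk_meas h).aemeasurable).2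
        (Xw_integrable h i p n)
    rw [h1] at h2
    exact (integrable_map_measure hm.aestronglyMeasurable (pwalk_meas p).aemeasurable).1 h2
  intro p p' hpp
  simp only [hE]
  refine integral_mono (hI p) (hI p') fun q => ?_
  refine Int.cast_le.2 (pwalk_mono _ _ _ (fun z hz => ?_) n i)
  exact decide_eq_true ((of_decide_eq_true hz).trans_le hpp)

/-- The velocity of the orthant model. -/
noncomputable def vel (h : 2 * 5 ≤ d) (p : unitInterval) (i : Fin d) : ℝ :=
  (Xw_lln h i p).choose

lemma vel_mono (h : 2 * 5 ≤ d) (i : Fin d) : Monotone fun p => vel h p i := fun p p' hpp =>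
  le_of_tendsto_of_tendsto' (Xw_lln h i p).choose_spec.1 (Xw_lln h i p').choose_spec.1 fun n =>
    div_le_div_of_nonneg_right (Xm_mono h i n hpp) n.cast_nonneg

/-- The law of large numbers for the lazily revealed walk, in vector form. -/
lemma lwalk_velocity (h : 2 * 5 ≤ d) (p : unitInterval) : ∀ᵐ w ∂(lawL d p),
    Tendsto (fun n : ℕ => (n : ℝ)⁻¹ • (fun i => ((lwalk h w n i : ℤ) : ℝ))) atTop
      (𝓝 (vel h p)) := by
  filter_upwards [ae_all_iff.2 fun i => (Xw_lln h i p).choose_spec.2] with w hw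
  refine tendsto_pi_nhds.2 fun i => (hw i).congr fun n => ?_
  rw [div_eq_inv_mul]
  rfl

end

end Orth

/-- the `d`-dimensional orthant model (uniform RWRE on
`(E¹, E²) = ({e_1,…,e_d}, {-e_1,…,-e_d})` with parameter `p`): (i) for `d ≥ 6` the walk
is transient for every `p`; (ii) for `d ≥ 10`, deterministic velocities `v[p]` exist
and each coordinate of `v[p]` is nondecreasing in `p`. -/
theorem stmt17 {d : ℕ} (hd : 2 ≤ d)
    (μ : ℝ → Measure (EnvDist d))
    (hμ : ∀ p ∈ Set.Ioo (0 : ℝ) 1,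
      μ p {γ : EnvDist d | ∀ i : Fin d × Bool,
          γ.prob (stepVec d i) = if i.2 = true then (d : ℝ)⁻¹ else 0} = ENNReal.ofReal p ∧
      μ p {γ : EnvDist d | ∀ i : Fin d × Bool,
          γ.prob (stepVec d i) = if i.2 = true then 0 else (d : ℝ)⁻¹} =
        ENNReal.ofReal (1 - p))
    (P : ℝ → Measure (RWSpace d))
    (hP : ∀ p ∈ Set.Ioo (0 : ℝ) 1, IsRWRE (μ p) (P p)) :
    (6 ≤ d → ∀ p ∈ Set.Ioo (0 : ℝ) 1,
      P p {q : RWSpace d | ∀ x : Site d, {n : ℕ | q.2 n = x}.Finite} = 1) ∧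
    (10 ≤ d → ∃ v : ℝ → Fin d → ℝ,
      (∀ p ∈ Set.Ioo (0 : ℝ) 1,
        P p {q : RWSpace d |
          Tendsto (fun n : ℕ => (n : ℝ)⁻¹ • (fun i => ((q.2 n i : ℤ) : ℝ))) atTop
            (𝓝 (v p))} = 1) ∧
      (∀ i : Fin d, MonotoneOn (fun p => v p i) (Set.Ioo 0 1))) := by
  have : NeZero d := ⟨by omega⟩
  refine ⟨fun h6 p hp => ?_, fun h10 => ?_⟩
  · have h : 2 * 3 ≤ d := h6
    exact Orth.rwre_prob_one (p := ⟨p, hp.1.le, hp.2.le⟩) h (Orth.oSet_bern (hμ p hp)) (hP p hp)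
      Orth.measurableSet_transient (Orth.lwalk_transient h _)
  · have h : 2 * 5 ≤ d := h10
    refine ⟨fun p => Orth.vel h (projIcc 0 1 zero_le_one p), fun p hp => ?_, fun i => ?_⟩
    · beta_reduce
      rw [projIcc_of_mem zero_le_one (Ioo_subset_Icc_self hp)]
      exact Orth.rwre_prob_one (p := ⟨p, hp.1.le, hp.2.le⟩) h (Orth.oSet_bern (hμ p hp)) (hP p hp)
        (Orth.measurableSet_velocity _) (Orth.lwalk_velocity h _)
    · exact ((Orth.vel_mono h i).comp (monotone_projIcc zero_le_one)).monotoneOn _
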